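/- arXiv:2308.07875 — 3 statements merged into one kernel-verified Lean document; each statement's English description precedes it below -/
import Mathlib

section
/- Let a ∈ ℝ with |a| ≤ 1/2 and let b > π/2. Let Γ = ℤ(1,0) + ℤ(a,b) ⊂ ℝ², let ω : ℝ² → ℝ be smooth and Γ-periodic, let λ > 0, and let φ = (φ₁, φ₂) : ℝ² → ℂ² be smooth, not identically zero, with φ(p + (1,0)) = φ(p) and φ(p + (a,b)) = −φ(p) for all p ∈ ℝ², satisfying (∂ₓ − i∂_y)φ₂ = λ e^{ω} φ₁ and −(∂ₓ + i∂_y)φ₁ = λ e^{ω} φ₂ on ℝ². If equality λ² · b · ∫₀¹∫₀¹ e^{2ω(s + ta, tb)} ds dt = π²/b holds, then ω is constant. (Uniqueness part of Theorem 4.4: the flat metric is the unique smooth minimiser for the non-trivial spin structure.) -/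
/-- Partial derivative in the first coordinate direction of a map on `ℝ × ℝ`. -/
noncomputable def dX (f : ℝ × ℝ → ℂ) (p : ℝ × ℝ) : ℂ := fderiv ℝ f p (1, 0)

/-- Partial derivative in the second coordinate direction of a map on `ℝ × ℝ`. -/
noncomputable def dY (f : ℝ × ℝ → ℂ) (p : ℝ × ℝ) : ℂ := fderiv ℝ f p (0, 1)

set_option linter.all false
open intervalIntegral


section slice
variable {E : Type*} [NormedAddCommGroup E] [InnerProductSpace ℝ E]

theorem dt_sphere_length (τ τ' : ℝ → E) (hτ : ∀ t, HasDerivAt τ (τ' t) t) (hc : Continuous τ')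
    (h1 : ∀ t, ‖τ t‖ = 1) (hanti : τ 1 = - τ 0) : Real.pi ≤ ∫ t in (0:ℝ)..1, ‖τ' t‖ := by
  have hτc : Continuous τ := continuous_iff_continuousAt.2 fun t => (hτ t).continuousAt
  set f : ℝ → ℝ := fun t => inner ℝ (τ 0) (τ t) with hf
  have hfc : Continuous f := continuous_const.inner hτc
  have hfd : ∀ t, HasDerivAt f (inner ℝ (τ 0) (τ' t)) t := by
    intro t
    have := (hasDerivAt_const t (τ 0)).inner ℝ (hτ t)
    simpa using this
  have hperp : ∀ t, inner ℝ (τ t) (τ' t) = 0 := by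
    intro t
    have h := (hτ t).inner ℝ (hτ t)
    have h2 : (fun t => inner ℝ (τ t) (τ t)) = fun _ => (1:ℝ) := by
      funext s; rw [real_inner_self_eq_norm_sq, h1]; norm_num
    rw [h2] at h
    have := h.unique (hasDerivAt_const t (1:ℝ))
    rw [real_inner_comm (τ t) (τ' t)] at this
    linarith
  have hbd : ∀ t, |inner ℝ (τ 0) (τ' t)| ≤ Real.sqrt (1 - f t ^ 2) * ‖τ' t‖ := by
    intro t
    have e : inner ℝ (τ 0) (τ' t) = inner ℝ (τ 0 - f t • τ t) (τ' t) := by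
      rw [inner_sub_left, inner_smul_left, hperp]; simp
    have n : ‖τ 0 - f t • τ t‖ = Real.sqrt (1 - f t ^ 2) := by
      rw [eq_comm]
      have : 1 - f t ^ 2 = ‖τ 0 - f t • τ t‖ ^ 2 := by
        rw [norm_sub_sq_real, norm_smul, h1, h1, inner_smul_right]
        simp only [Real.norm_eq_abs, mul_one, sq_abs, hf]
        ring
      rw [this, Real.sqrt_sq (norm_nonneg _)]
    rw [e, ← n]
    exact abs_real_inner_le_norm _ _
  have hf1 : ∀ t, f t ^ 2 ≤ 1 := by
    intro t
    have := abs_real_inner_le_norm (τ 0) (τ t)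
    rw [h1, h1, mul_one] at this
    exact (sq_le_one_iff_abs_le_one _).2 this
  have key : ∀ κ : ℝ, 0 < κ → κ < 1 → 2 * Real.arcsin κ ≤ ∫ t in (0:ℝ)..1, ‖τ' t‖ := by
    intro κ hκ0 hκ1
    have hlt : ∀ t, 0 < 1 - (κ * f t)^2 := by
      intro t
      have : κ^2 < 1 := by nlinarith
      nlinarith [hf1 t, sq_nonneg (f t), sq_nonneg κ]
    set g' : ℝ → ℝ := fun t => 1 / Real.sqrt (1 - (κ * f t)^2) * (κ * inner ℝ (τ 0) (τ' t))
    have hg : ∀ t, HasDerivAt (fun t => Real.arcsin (κ * f t)) (g' t) t := by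
      intro t
      have := hlt t
      have ha := Real.hasDerivAt_arcsin (x := κ * f t) (by intro h; rw [h] at this; norm_num at this) (by intro h; rw [h] at this; norm_num at this)
      exact ha.comp t ((hfd t).const_mul κ)
    have hg'c : Continuous g' := by
      have : Continuous fun t => inner ℝ (τ 0) (τ' t) := continuous_const.inner hc
      refine (Continuous.div continuous_const (by fun_prop) ?_).mul (by fun_prop)
      intro t; exact (Real.sqrt_pos.2 (hlt t)).ne'
    have hI := integral_eq_sub_of_hasDerivAt (fun t _ => hg t) (hg'c.intervalIntegrable 0 1)
    have hf0 : f 0 = 1 := by simp [hf, real_inner_self_eq_norm_sq, h1]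
    have hf1' : f 1 = -1 := by simp [hf, hanti, real_inner_self_eq_norm_sq, h1]
    rw [hf0, hf1', mul_one, mul_neg, mul_one, Real.arcsin_neg] at hI
    have hle : |∫ t in (0:ℝ)..1, g' t| ≤ ∫ t in (0:ℝ)..1, |g' t| := abs_integral_le_integral_abs zero_le_one
    have hle2 : ∫ t in (0:ℝ)..1, |g' t| ≤ ∫ t in (0:ℝ)..1, ‖τ' t‖ := by
      apply integral_mono_on zero_le_one (hg'c.abs.intervalIntegrable 0 1) (hc.norm.intervalIntegrable 0 1)
      intro t _
      have hs := Real.sqrt_pos.2 (hlt t)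
      rw [abs_mul, abs_of_pos (by positivity), abs_mul, abs_of_pos hκ0, one_div, inv_mul_le_iff₀ hs]
      have : κ * Real.sqrt (1 - f t^2) ≤ Real.sqrt (1 - (κ * f t)^2) := by
        apply Real.le_sqrt_of_sq_le
        rw [mul_pow, Real.sq_sqrt (by linarith [hf1 t])]
        nlinarith [hf1 t]
      calc κ * |inner ℝ (τ 0) (τ' t)| ≤ κ * (Real.sqrt (1 - f t ^ 2) * ‖τ' t‖) := by gcongr; exact hbd t
        _ = (κ * Real.sqrt (1 - f t ^ 2)) * ‖τ' t‖ := by ring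
        _ ≤ _ := by gcongr
    have : -(∫ t in (0:ℝ)..1, g' t) ≤ |∫ t in (0:ℝ)..1, g' t| := neg_le_abs _
    linarith
  have lim : Filter.Tendsto (fun κ : ℝ => 2 * Real.arcsin κ) (nhdsWithin 1 (Set.Iio 1)) (nhds (2 * Real.arcsin 1)) :=
    ((Real.continuous_arcsin.const_mul 2).tendsto 1).mono_left nhdsWithin_le_nhds
  have := le_of_tendsto lim (b := ∫ t in (0:ℝ)..1, ‖τ' t‖) (by
    filter_upwards [Ioo_mem_nhdsLT (show (0:ℝ) < 1 by norm_num)] with κ hκ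
    exact key κ hκ.1 hκ.2)
  rw [Real.arcsin_one] at this
  linarith

variable (J : E →L[ℝ] E) 

theorem dt_slice (hJ : ∀ x y, inner ℝ (J x) y = - inner ℝ x (J y)) (hJJ : ∀ x, J (J x) = - x)
    (σ σ' : ℝ → E) (hσ : ∀ t, HasDerivAt σ (σ' t) t) (hc : Continuous σ')
    (h1 : ∀ t, ‖σ t‖ = 1) (hanti : σ 1 = - σ 0) (A : ℝ → ℝ) (hA : ∀ t, A t = inner ℝ (J (σ t)) (σ' t))
    (T : ℝ → E) (hT : ∀ t, T t = σ' t - A t • J (σ t)) (h : ℝ) (hh : h = ∫ t in (0:ℝ)..1, A t) :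
    Real.pi ≤ (∫ t in (0:ℝ)..1, ‖T t‖) + |h| ∧ Real.pi ^ 2 - h ^ 2 ≤ ∫ t in (0:ℝ)..1, ‖T t‖ ^ 2 := by
  have hσc : Continuous σ := continuous_iff_continuousAt.2 fun t => (hσ t).continuousAt
  have hAc : Continuous A := by
    have : A = fun t => inner ℝ (J (σ t)) (σ' t) := funext hA
    rw [this]; exact (J.continuous.comp hσc).inner hc
  have hTc : Continuous T := by
    have : T = fun t => σ' t - A t • J (σ t) := funext hT
    rw [this]; fun_prop
  set θ : ℝ → ℝ := fun t => ∫ r in (0:ℝ)..t, (h - A r) with hθ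
  have hθd : ∀ t, HasDerivAt θ (h - A t) t := fun t => 
    integral_hasDerivAt_right ((by fun_prop : Continuous fun r => h - A r).intervalIntegrable _ _) 
      (Continuous.stronglyMeasurableAtFilter (by fun_prop) _ _) (by fun_prop)
  have hθ0 : θ 0 = 0 := by simp [hθ]
  have hθ1 : θ 1 = 0 := by 
    simp only [hθ]
    rw [integral_sub (by simp) (hAc.intervalIntegrable _ _), ← hh]; simp
  have hθc : Continuous θ := continuous_iff_continuousAt.2 fun t => (hθd t).continuousAt
  have hperp : ∀ t, inner ℝ (σ t) (σ' t) = 0 := by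
    intro t
    have h := (hσ t).inner ℝ (hσ t)
    have h2 : (fun t => inner ℝ (σ t) (σ t)) = fun _ => (1:ℝ) := by
      funext s; rw [real_inner_self_eq_norm_sq, h1]; norm_num
    rw [h2] at h
    have := h.unique (hasDerivAt_const t (1:ℝ))
    rw [real_inner_comm (σ t) (σ' t)] at this
    linarith
  have hxJ : ∀ x, inner ℝ x (J x) = 0 := by
    intro x
    have := hJ x x
    rw [real_inner_comm] at this
    linarith
  have hJn : ∀ x y, inner ℝ (J x) (J y) = inner ℝ x y := by
    intro x y; rw [hJ, hJJ]; simp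
  set τ : ℝ → E := fun t => Real.cos (θ t) • σ t + Real.sin (θ t) • J (σ t) with hτ
  set τ' : ℝ → E := fun t => (Real.cos (θ t) • T t + Real.sin (θ t) • J (T t)) + h • (Real.cos (θ t) • J (σ t) - Real.sin (θ t) • σ t) with hτ'
  have hτd : ∀ t, HasDerivAt τ (τ' t) t := by
    intro t
    have hJσ : HasDerivAt (fun t => J (σ t)) (J (σ' t)) t := J.hasFDerivAt.comp_hasDerivAt t (hσ t)
    have := ((hθd t).cos.smul (hσ t)).add ((hθd t).sin.smul hJσ)
    refine this.congr_deriv ?_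
    simp only [hτ', hT, map_sub, map_smul, hJJ]
    module
  have hin : ∀ t, ‖τ t‖ = 1 := by
    intro t
    have : ‖τ t‖ ^ 2 = 1 := by
      rw [← real_inner_self_eq_norm_sq]
      simp only [hτ, inner_add_left, inner_add_right, inner_smul_left, inner_smul_right, hJn, hJ, hJJ, hxJ, real_inner_self_eq_norm_sq, h1]
      simp
      nlinarith [Real.sin_sq_add_cos_sq (θ t)]
    nlinarith [norm_nonneg (τ t)]
  have hTσ : ∀ t, inner ℝ (σ t) (T t) = 0 := by
    intro t; rw [hT, inner_sub_right, hperp, inner_smul_right, hxJ]; simp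
  have hTJσ : ∀ t, inner ℝ (σ t) (J (T t)) = 0 := by
    intro t
    have : inner ℝ (J (σ t)) (T t) = 0 := by
      rw [hT, inner_sub_right, ← hA, inner_smul_right, hJn, real_inner_self_eq_norm_sq, h1]; simp
    rw [hJ] at this; linarith
  have hn' : ∀ t, ‖τ' t‖ ^ 2 = ‖T t‖ ^ 2 + h ^ 2 := by
    intro t
    have e1 : inner ℝ (T t) (σ t) = 0 := by rw [real_inner_comm]; exact hTσ t
    have e2 : inner ℝ (T t) (J (σ t)) = 0 := by
      have := hJ (σ t) (T t)
      rw [hTJσ, real_inner_comm] at this; simpa using this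
    rw [← real_inner_self_eq_norm_sq]
    simp only [hτ', inner_add_left, inner_add_right, inner_sub_left, inner_sub_right, inner_smul_left, inner_smul_right, hJn, hJ, hJJ, hxJ, real_inner_self_eq_norm_sq, h1, e1, e2, hTσ, hTJσ, inner_neg_right]
    simp
    have := Real.sin_sq_add_cos_sq (θ t)
    linear_combination (‖T t‖ ^ 2 + h^2) * this
  have hτ'c : Continuous τ' := by
    simp only [hτ']; fun_prop
  have hlen := dt_sphere_length τ τ' hτd hτ'c hin (by simp [hτ, hθ0, hθ1, hanti])
  constructor
  · have : ∫ t in (0:ℝ)..1, ‖τ' t‖ ≤ ∫ t in (0:ℝ)..1, (‖T t‖ + |h|) := by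
      apply integral_mono_on zero_le_one (hτ'c.norm.intervalIntegrable 0 1) ((by fun_prop : Continuous fun t => ‖T t‖ + |h|).intervalIntegrable 0 1)
      intro t _
      apply abs_le_of_sq_le_sq' _ (by positivity) |>.2
      rw [hn']; nlinarith [norm_nonneg (T t), abs_nonneg h, sq_abs h, mul_nonneg (norm_nonneg (T t)) (abs_nonneg h)]
    rw [integral_add (hTc.norm.intervalIntegrable 0 1) (by simp)] at this
    simp at this
    linarith
  · set L := ∫ t in (0:ℝ)..1, ‖τ' t‖
    have e : ∫ t in (0:ℝ)..1, (‖τ' t‖^2 - (2 * L * ‖τ' t‖ - L^2)) = (∫ t in (0:ℝ)..1, ‖T t‖^2) + h^2 - L^2 := by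
      simp only [hn']
      rw [integral_sub (by apply Continuous.intervalIntegrable; fun_prop) (by apply Continuous.intervalIntegrable; fun_prop),
        integral_add (by apply Continuous.intervalIntegrable; fun_prop) (by simp),
        integral_sub (by apply Continuous.intervalIntegrable; fun_prop) (by simp), intervalIntegral.integral_const_mul]
      simp; ring
    have : 0 ≤ ∫ t in (0:ℝ)..1, (‖τ' t‖^2 - (2 * L * ‖τ' t‖ - L^2)) := by
      apply integral_nonneg zero_le_one
      intro t _
      nlinarith [sq_nonneg (‖τ' t‖ - L)]
    rw [e] at this
    nlinarith [Real.pi_pos]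
end slice


theorem dt_wirtinger (H h : ℝ → ℝ) (hH : ∀ s, HasDerivAt H (h s) s) (hc : Continuous h) (hper : H 1 = H 0)
    (hmean : ∫ s in (0:ℝ)..1, H s = 0) :
    4 * Real.pi ^ 2 * ∫ s in (0:ℝ)..1, H s ^ 2 ≤ ∫ s in (0:ℝ)..1, h s ^ 2 := by
  have hHc : Continuous H := continuous_iff_continuousAt.2 fun t => (hH t).continuousAt
  have mem : ∀ f : ℝ → ℝ, Continuous f → MeasureTheory.MemLp (fun x => (f x : ℂ)) 2 (MeasureTheory.volume.restrict (Set.Ioc (0:ℝ) 1)) := by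
    intro f hf
    have hf' : Continuous fun x => (f x : ℂ) := by fun_prop
    have h1 : MeasureTheory.MemLp (fun x => (f x : ℂ)) 2 (MeasureTheory.volume.restrict (Set.Icc (0:ℝ) 1)) := by
      rw [MeasureTheory.memLp_two_iff_integrable_sq_norm hf'.aestronglyMeasurable]
      exact (hf'.norm.pow 2).continuousOn.integrableOn_Icc
    exact h1.mono_measure (MeasureTheory.Measure.restrict_mono Set.Ioc_subset_Icc_self le_rfl)
  have p1 := hasSum_sq_fourierCoeffOn (zero_lt_one : (0:ℝ) < 1) (mem H hHc)
  have p2 := hasSum_sq_fourierCoeffOn (zero_lt_one : (0:ℝ) < 1) (mem h hc)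
  have key : ∀ n : ℤ, 4 * Real.pi ^ 2 * ‖fourierCoeffOn (zero_lt_one : (0:ℝ) < 1) (fun x => (H x : ℂ)) n‖ ^ 2 ≤ ‖fourierCoeffOn (zero_lt_one : (0:ℝ) < 1) (fun x => (h x : ℂ)) n‖ ^ 2 := by
    intro n
    by_cases hn : n = 0
    · subst hn
      have : fourierCoeffOn (zero_lt_one : (0:ℝ) < 1) (fun x => (H x : ℂ)) 0 = 0 := by
        rw [fourierCoeffOn_eq_integral]
        simp [intervalIntegral.integral_ofReal, hmean]
      rw [this]; simp
    · have := fourierCoeffOn_of_hasDerivAt (zero_lt_one : (0:ℝ) < 1) (f := fun x => (H x : ℂ)) (f' := fun x => (h x : ℂ)) hn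
        (fun x _ => (hH x).ofReal_comp) ((by fun_prop : Continuous fun x => (h x : ℂ)).intervalIntegrable _ _)
      rw [this, hper]
      simp only [sub_self, mul_zero, zero_sub, Complex.ofReal_one, Complex.ofReal_zero, sub_zero, one_mul, norm_mul, norm_div, norm_neg, norm_one, mul_pow, div_pow, one_pow, Complex.norm_I, Complex.norm_real, Complex.norm_intCast, Real.norm_eq_abs, sq_abs, Complex.norm_ofNat, mul_one]
      set z := ‖fourierCoeffOn (zero_lt_one : (0:ℝ) < 1) (fun x => (h x : ℂ)) n‖ ^ 2
      have hz : 0 ≤ z := by positivity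
      have hn1 : (1:ℝ) ≤ (n:ℝ)^2 := by
        have : (1:ℤ) ≤ n^2 := by have := Int.one_le_abs hn; nlinarith [sq_abs n]
        exact_mod_cast this
      have hpi := Real.pi_pos
      have e : 4 * Real.pi ^ 2 * (1 / (2 ^ 2 * Real.pi ^ 2 * (n:ℝ) ^ 2) * z) = z / (n:ℝ)^2 := by
        field_simp
        norm_num
      rw [e]
      exact div_le_self hz hn1
  have := hasSum_le key (p1.mul_left _) p2
  simpa using this

theorem dt_osc (h h' : ℝ → ℝ) (hd : ∀ s, HasDerivAt h (h' s) s) (hc : Continuous h') (hper : h 1 = h 0)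
    (r s : ℝ) (hr : r ∈ Set.Icc (0:ℝ) 1) (hs : s ∈ Set.Icc (0:ℝ) 1) :
    |h r - h s| ≤ (∫ x in (0:ℝ)..1, |h' x|) / 2 := by
  have main : ∀ r s : ℝ, 0 ≤ r → r ≤ s → s ≤ 1 → |h r - h s| ≤ (∫ x in (0:ℝ)..1, |h' x|) / 2 := by
    intro r s h0 hrs hs1
    have ii : ∀ a b : ℝ, IntervalIntegrable (fun x => |h' x|) MeasureTheory.volume a b := fun a b => hc.abs.intervalIntegrable a b
    have e : ∀ a b : ℝ, a ≤ b → |h b - h a| ≤ ∫ x in a..b, |h' x| := by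
      intro a b hab
      rw [← integral_eq_sub_of_hasDerivAt (fun x _ => hd x) (hc.intervalIntegrable a b)]
      exact abs_integral_le_integral_abs hab
    have e1 := e 0 r h0
    have e2 := e r s hrs
    have e3 := e s 1 hs1
    rw [← integral_add_adjacent_intervals (ii 0 s) (ii s 1), ← integral_add_adjacent_intervals (ii 0 r) (ii r s)]
    rw [hper] at e3
    rw [abs_le] at *
    constructor <;> linarith [e1.1,e1.2,e2.1,e2.2,e3.1,e3.2]
  rcases le_total r s with hrs | hrs
  · exact main r s hr.1 hrs hs.2
  · rw [abs_sub_comm]; exact main s r hs.1 hrs hr.2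

theorem dt_mean_osc (h h' : ℝ → ℝ) (hd : ∀ s, HasDerivAt h (h' s) s) (hc : Continuous h') (hper : h 1 = h 0)
    (hmean : ∫ s in (0:ℝ)..1, h s = 0) (s : ℝ) (hs : s ∈ Set.Icc (0:ℝ) 1) :
    |h s| ≤ (∫ x in (0:ℝ)..1, |h' x|) / 2 := by
  have hHc : Continuous h := continuous_iff_continuousAt.2 fun t => (hd t).continuousAt
  have e : h s = ∫ r in (0:ℝ)..1, (h s - h r) := by
    rw [integral_sub (by simp) (hHc.intervalIntegrable _ _), hmean]; simp
  rw [e]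
  calc |∫ r in (0:ℝ)..1, (h s - h r)| ≤ ∫ r in (0:ℝ)..1, |h s - h r| := abs_integral_le_integral_abs zero_le_one
    _ ≤ ∫ r in (0:ℝ)..1, ((∫ x in (0:ℝ)..1, |h' x|) / 2) := by
      apply integral_mono_on zero_le_one ((by fun_prop : Continuous fun r => |h s - h r|).intervalIntegrable _ _) (by simp)
      intro r hr
      exact dt_osc h h' hd hc hper s r hs hr
    _ = _ := by simp

theorem dt_oneD (h h' eT eX : ℝ → ℝ) (hd : ∀ s, HasDerivAt h (h' s) s) (hc : Continuous h') (hper : h 1 = h 0)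
    (hmean : ∫ s in (0:ℝ)..1, h s = 0) (hTc : Continuous eT) (hXc : Continuous eX)
    (hT0 : ∀ s, 0 ≤ eT s) (hX0 : ∀ s, 0 ≤ eX s) (hT : ∀ s, Real.pi ^ 2 - h s ^ 2 ≤ eT s)
    (hX : ∀ s κ, 0 ≤ κ → 5/4 * κ * |h' s| ≤ 25/16 * eX s + κ ^ 2 * eT s) :
    Real.pi ^ 2 ≤ (∫ s in (0:ℝ)..1, eT s) + 25/16 * ∫ s in (0:ℝ)..1, eX s := by
  have hhc : Continuous h := continuous_iff_continuousAt.2 fun t => (hd t).continuousAt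
  have ii : ∀ f : ℝ → ℝ, Continuous f → IntervalIntegrable f MeasureTheory.volume 0 1 := fun f hf => hf.intervalIntegrable 0 1
  have hsum : (∫ s in (0:ℝ)..1, eT s) + 25/16 * ∫ s in (0:ℝ)..1, eX s = ∫ s in (0:ℝ)..1, (eT s + 25/16 * eX s) := by
    rw [integral_add (ii _ hTc) (ii _ (by fun_prop)), intervalIntegral.integral_const_mul]
  rw [hsum]
  set S := ∫ x in (0:ℝ)..1, |h' x| with hS
  have hS0 : 0 ≤ S := integral_nonneg zero_le_one fun _ _ => abs_nonneg _
  set y2 := ∫ x in (0:ℝ)..1, h x ^ 2 with hy2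
  have hyS : y2 ≤ S ^ 2 / 16 := by
    obtain ⟨r, hr, hrm⟩ := isCompact_Icc.exists_isMinOn (Set.nonempty_Icc.2 (zero_le_one (α := ℝ))) hhc.continuousOn
    obtain ⟨s, hs, hsm⟩ := isCompact_Icc.exists_isMaxOn (Set.nonempty_Icc.2 (zero_le_one (α := ℝ))) hhc.continuousOn
    have ho := dt_osc h h' hd hc hper r s hr hs
    have e : ∫ x in (0:ℝ)..1, (h r * h s + h x ^ 2 - (h r + h s) * h x) = h r * h s + y2 := by
      rw [integral_sub (ii _ (by fun_prop)) (ii _ (by fun_prop)), integral_add (by simp) (ii _ (by fun_prop))]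
      simp [hy2, hmean]
    have : ∫ x in (0:ℝ)..1, (h r * h s + h x ^ 2 - (h r + h s) * h x) ≤ 0 := by
      have : ∫ x in (0:ℝ)..1, (h r * h s + h x ^ 2 - (h r + h s) * h x) ≤ ∫ x in (0:ℝ)..1, (0:ℝ) := by
        apply integral_mono_on zero_le_one (ii _ (by fun_prop)) (by simp)
        intro x hx
        have h1 : h r ≤ h x := hrm hx
        have h2 : h x ≤ h s := hsm hx
        nlinarith
      simpa using this
    rw [e] at this
    have h3 : (h r - h s)^2 ≤ (S/2)^2 := sq_le_sq' (by linarith [(abs_le.1 ho).1]) (abs_le.1 ho).2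
    nlinarith [sq_nonneg (h r + h s)]
  by_cases hcase : 4 < y2
  · have hS8 : 8 ≤ S := by nlinarith
    have : ∫ s in (0:ℝ)..1, 5/4 * |h' s| ≤ ∫ s in (0:ℝ)..1, (eT s + 25/16 * eX s) := by
      apply integral_mono_on zero_le_one (ii _ (by fun_prop)) (ii _ (by fun_prop))
      intro x _
      have := hX x 1 zero_le_one
      linarith
    rw [intervalIntegral.integral_const_mul] at this
    nlinarith [Real.pi_lt_d2, Real.pi_pos]
  push Not at hcase
  set H0 : ℝ → ℝ := fun s => ∫ r in (0:ℝ)..s, h r with hH0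
  have hH0d : ∀ s, HasDerivAt H0 (h s) s := fun t => 
    integral_hasDerivAt_right (hhc.intervalIntegrable _ _) (hhc.stronglyMeasurableAtFilter _ _) hhc.continuousAt
  have hH0c : Continuous H0 := continuous_iff_continuousAt.2 fun t => (hH0d t).continuousAt
  set c := ∫ s in (0:ℝ)..1, H0 s
  set H : ℝ → ℝ := fun s => H0 s - c with hH
  have hHd : ∀ s, HasDerivAt H (h s) s := fun s => (hH0d s).sub_const c
  have hHc : Continuous H := hH0c.sub continuous_const
  have hHper : H 1 = H 0 := by simp [hH, hH0, hmean]
  have hHmean : ∫ s in (0:ℝ)..1, H s = 0 := by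
    simp only [hH]
    rw [integral_sub (ii _ hH0c) (by simp)]; simp [c]
  have hW := dt_wirtinger H h hHd hhc hHper hHmean
  have habs : (∫ x in (0:ℝ)..1, |h x|) ≤ 2 := by
    set L := ∫ x in (0:ℝ)..1, |h x|
    have e : ∫ x in (0:ℝ)..1, (h x ^2 - (2 * L * |h x| - L^2)) = y2 - L^2 := by
      rw [integral_sub (ii _ (by fun_prop)) (ii _ (by fun_prop)), integral_sub (ii _ (by fun_prop)) (by simp), intervalIntegral.integral_const_mul]
      simp [hy2]; ring
    have : 0 ≤ ∫ x in (0:ℝ)..1, (h x ^2 - (2 * L * |h x| - L^2)) := by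
      apply integral_nonneg zero_le_one
      intro t _
      nlinarith [sq_nonneg (|h t| - L), sq_abs (h t)]
    rw [e] at this
    nlinarith
  have hH1 : ∀ s ∈ Set.Icc (0:ℝ) 1, |H s| ≤ 1 := by
    intro s hs
    have := dt_mean_osc H h hHd hhc hHper hHmean s hs
    linarith
  have hparts : ∫ s in (0:ℝ)..1, H s * h' s = - y2 := by
    have := integral_mul_deriv_eq_deriv_mul (u := H) (v := h) (fun x _ => hHd x) (fun x _ => hd x) (ii _ hhc) (ii _ hc)
    rw [this, hHper, hper]
    simp only [sub_self, zero_sub, hy2, sq]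
  have hparts2 : y2 ≤ ∫ s in (0:ℝ)..1, |H s| * |h' s| := by
    have := abs_integral_le_integral_abs (f := fun s => H s * h' s) (μ := MeasureTheory.volume) (zero_le_one (α := ℝ))
    rw [hparts, abs_neg] at this
    simp only [abs_mul] at this
    exact (le_abs_self _).trans this
  have hfin : ∫ s in (0:ℝ)..1, (Real.pi ^ 2 - h s ^ 2 - Real.pi ^ 2 * H s ^ 2 + 5/4 * (|H s| * |h' s|)) ≤ ∫ s in (0:ℝ)..1, (eT s + 25/16 * eX s) := by
    apply integral_mono_on zero_le_one (ii _ (by fun_prop)) (ii _ (by fun_prop))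
    intro s hs
    have h1 := hX s |H s| (abs_nonneg _)
    have h2 := hT s
    have h3 := hH1 s hs
    rw [sq_abs] at h1
    have h4 : H s ^ 2 ≤ 1 := (sq_le_one_iff_abs_le_one _).2 h3
    nlinarith [mul_nonneg (sub_nonneg.2 h4) (sub_nonneg.2 h2), mul_nonneg (sq_nonneg (H s)) (sq_nonneg (h s))]
  rw [integral_add (ii _ (by fun_prop)) (ii _ (by fun_prop)), integral_sub (ii _ (by fun_prop)) (ii _ (by fun_prop)), integral_sub (by simp) (ii _ (by fun_prop)), intervalIntegral.integral_const_mul, intervalIntegral.integral_const_mul] at hfin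
  simp only [integral_const, sub_zero, one_smul] at hfin
  linarith


section par
variable {F : Type*} [NormedAddCommGroup F] [NormedSpace ℝ F]

theorem dt_hasDerivAt_fst (f : ℝ × ℝ → F) (hf : Differentiable ℝ f) (s t : ℝ) :
    HasDerivAt (fun s => f (s, t)) (fderiv ℝ f (s, t) (1, 0)) s := by
  have h : HasDerivAt (fun s : ℝ => (s, t)) ((1:ℝ), (0:ℝ)) s := (hasDerivAt_id s).prodMk (hasDerivAt_const s t)
  exact (hf (s, t)).hasFDerivAt.comp_hasDerivAt s h

theorem dt_hasDerivAt_snd (f : ℝ × ℝ → F) (hf : Differentiable ℝ f) (s t : ℝ) :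
    HasDerivAt (fun t => f (s, t)) (fderiv ℝ f (s, t) (0, 1)) t := by
  have h : HasDerivAt (fun t : ℝ => (s, t)) ((0:ℝ), (1:ℝ)) t := (hasDerivAt_const t s).prodMk (hasDerivAt_id t)
  exact (hf (s, t)).hasFDerivAt.comp_hasDerivAt t h

theorem dt_contDiff_fderiv (f : ℝ × ℝ → F) (hf : ContDiff ℝ (⊤ : ℕ∞) f) (v : ℝ × ℝ) :
    ContDiff ℝ (⊤ : ℕ∞) (fun p => fderiv ℝ f p v) :=
  (hf.fderiv_right (m := (⊤ : ℕ∞)) (by simp)).clm_apply contDiff_const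

theorem dt_fderiv_comm (f : ℝ × ℝ → F) (hf : ContDiff ℝ (⊤ : ℕ∞) f) (v w p : ℝ × ℝ) :
    fderiv ℝ (fun p => fderiv ℝ f p v) p w = fderiv ℝ (fun p => fderiv ℝ f p w) p v := by
  have hd : DifferentiableAt ℝ (fderiv ℝ f) p :=
    ((hf.fderiv_right (m := (⊤ : ℕ∞)) (by simp)).differentiable (by simp)) p
  have e : ∀ v w : ℝ × ℝ, fderiv ℝ (fun p => fderiv ℝ f p v) p w = fderiv ℝ (fderiv ℝ f) p w v := by
    intro v w
    rw [fderiv_clm_apply hd (differentiableAt_const v)]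
    simp
  rw [e, e]
  have := (hf.contDiffAt (x := p)).isSymmSndFDerivAt (by simp only [minSmoothness_of_isRCLikeNormedField]; exact (WithTop.coe_le_coe.2 le_top : ((2:ℕ∞) : WithTop ℕ∞) ≤ ((⊤ : ℕ∞) : WithTop ℕ∞)))
  exact this.eq w v

theorem dt_hasDerivAt_param (f : ℝ × ℝ → ℝ) (hf : ContDiff ℝ (⊤ : ℕ∞) f) (s : ℝ) :
    HasDerivAt (fun s => ∫ t in (0:ℝ)..1, f (s, t)) (∫ t in (0:ℝ)..1, fderiv ℝ f (s, t) (1, 0)) s := by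
  have hc := (dt_contDiff_fderiv f hf (1, 0)).continuous
  have hfc := hf.continuous
  obtain ⟨C, hC⟩ := (isCompact_Icc.prod isCompact_Icc : IsCompact (Set.Icc (s-1) (s+1) ×ˢ Set.Icc (0:ℝ) 1)).exists_bound_of_continuousOn hc.continuousOn
  refine (intervalIntegral.hasDerivAt_integral_of_dominated_loc_of_deriv_le (F := fun s t => f (s, t)) (F' := fun s t => fderiv ℝ f (s, t) (1, 0)) (bound := fun _ => C) (s := Set.Icc (s-1) (s+1)) (Icc_mem_nhds (by linarith) (by linarith)) ?_ ?_ ?_ ?_ ?_ ?_).2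
  · exact Filter.Eventually.of_forall fun x => (by fun_prop : Continuous fun t => f (x, t)).aestronglyMeasurable
  · exact (by fun_prop : Continuous fun t => f (s, t)).intervalIntegrable _ _
  · exact (hc.comp (by fun_prop : Continuous fun t : ℝ => (s, t))).aestronglyMeasurable
  · refine Filter.Eventually.of_forall fun t ht x hx => hC _ ⟨hx, ?_⟩
    rw [Set.uIoc_of_le zero_le_one] at ht
    exact Set.Ioc_subset_Icc_self ht
  · simp
  · exact Filter.Eventually.of_forall fun t _ x _ => dt_hasDerivAt_fst f (hf.differentiable (by simp)) x t

theorem dt_cont_param (f : ℝ × ℝ → ℝ) (hf : Continuous f) : Continuous fun s => ∫ t in (0:ℝ)..1, f (s, t) :=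
  intervalIntegral.continuous_parametric_intervalIntegral_of_continuous' (f := fun s t => f (s, t)) hf 0 1

theorem dt_fderiv_shift (f : ℝ × ℝ → F) (v : ℝ × ℝ) (h : ∀ p, f (p + v) = f p) (p : ℝ × ℝ) :
    fderiv ℝ f (p + v) = fderiv ℝ f p := by
  have : (fun p => f (p + v)) = f := funext h
  rw [← fderiv_comp_add_right, this]

theorem dt_fderiv_shift_neg (f : ℝ × ℝ → F) (v : ℝ × ℝ) (h : ∀ p, f (p + v) = - f p) (p : ℝ × ℝ) :
    fderiv ℝ f (p + v) = - fderiv ℝ f p := by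
  have : (fun p => f (p + v)) = fun p => - f p := funext h
  rw [← fderiv_comp_add_right, this, fderiv_fun_neg]
end par

section slice2
variable {E : Type*} [NormedAddCommGroup E] [InnerProductSpace ℝ E] (J : E →L[ℝ] E)

/-- connection coefficient -/
noncomputable def dtA (σ : ℝ × ℝ → E) (v p : ℝ × ℝ) : ℝ := inner ℝ (J (σ p)) (fderiv ℝ σ p v)
/-- covariant derivative -/
noncomputable def dtN (σ : ℝ × ℝ → E) (v p : ℝ × ℝ) : E := fderiv ℝ σ p v - dtA J σ v p • J (σ p)

variable {J}

theorem dtA_contDiff {σ : ℝ × ℝ → E} (hσ : ContDiff ℝ (⊤ : ℕ∞) σ) (v : ℝ × ℝ) : ContDiff ℝ (⊤ : ℕ∞) (dtA J σ v) := by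
  unfold dtA
  exact (J.contDiff.comp hσ).inner ℝ (dt_contDiff_fderiv σ hσ v)

theorem dtN_contDiff {σ : ℝ × ℝ → E} (hσ : ContDiff ℝ (⊤ : ℕ∞) σ) (v : ℝ × ℝ) : ContDiff ℝ (⊤ : ℕ∞) (dtN J σ v) := by
  unfold dtN
  exact (dt_contDiff_fderiv σ hσ v).sub ((dtA_contDiff hσ v).smul (J.contDiff.comp hσ))

theorem dt_perp {σ : ℝ × ℝ → E} (hσ : ContDiff ℝ (⊤ : ℕ∞) σ) (h1 : ∀ p, ‖σ p‖ = 1) (v p : ℝ × ℝ) :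
    inner ℝ (σ p) (fderiv ℝ σ p v) = 0 := by
  have hd := hσ.differentiable (by simp) p
  have h := fderiv_inner_apply ℝ hd hd v
  have h2 : (fun t => inner ℝ (σ t) (σ t)) = fun _ => (1:ℝ) := by
    funext s; rw [real_inner_self_eq_norm_sq, h1]; norm_num
  rw [h2] at h
  simp only [fderiv_fun_const] at h
  rw [real_inner_comm (σ p) (fderiv ℝ σ p v)] at h
  simp at h
  linarith

theorem dt_curv (hJ : ∀ x y, inner ℝ (J x) y = - inner ℝ x (J y)) (hJJ : ∀ x, J (J x) = - x)
    {σ : ℝ × ℝ → E} (hσ : ContDiff ℝ (⊤ : ℕ∞) σ) (h1 : ∀ p, ‖σ p‖ = 1) (v w p : ℝ × ℝ) :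
    fderiv ℝ (dtA J σ w) p v - fderiv ℝ (dtA J σ v) p w = 2 * inner ℝ (J (dtN J σ v p)) (dtN J σ w p) := by
  have hd := hσ.differentiable (by simp) p
  have hJd : DifferentiableAt ℝ (fun p => J (σ p)) p := J.differentiableAt.comp p hd
  have e : ∀ v w : ℝ × ℝ, fderiv ℝ (dtA J σ w) p v = inner ℝ (J (σ p)) (fderiv ℝ (fun p => fderiv ℝ σ p w) p v) + inner ℝ (J (fderiv ℝ σ p v)) (fderiv ℝ σ p w) := by
    intro v w
    unfold dtA
    rw [fderiv_inner_apply ℝ hJd ((dt_contDiff_fderiv σ hσ w).differentiable (by simp) p)]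
    congr 3
    have : fderiv ℝ (fun p => J (σ p)) p = J.comp (fderiv ℝ σ p) := (J.hasFDerivAt.comp p hd.hasFDerivAt).fderiv
    rw [this]; rfl
  rw [e, e, dt_fderiv_comm σ hσ v w]
  have p1 := dt_perp hσ h1 v p
  have p2 := dt_perp hσ h1 w p
  have hxJ : ∀ x, inner ℝ x (J x) = 0 := by
    intro x
    have := hJ x x
    rw [real_inner_comm] at this
    linarith
  have hJn : ∀ x y, inner ℝ (J x) (J y) = inner ℝ x y := by
    intro x y; rw [hJ, hJJ]; simp
  have n1 : inner ℝ (σ p) (σ p) = 1 := by rw [real_inner_self_eq_norm_sq, h1]; norm_num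
  have q1 : inner ℝ (fderiv ℝ σ p v) (σ p) = 0 := by rw [real_inner_comm]; exact p1
  have a1 : inner ℝ (J (fderiv ℝ σ p w)) (fderiv ℝ σ p v) = - inner ℝ (J (fderiv ℝ σ p v)) (fderiv ℝ σ p w) := by
    rw [hJ, real_inner_comm]
  have r : inner ℝ (J (dtN J σ v p)) (dtN J σ w p) = inner ℝ (J (fderiv ℝ σ p v)) (fderiv ℝ σ p w) := by
    unfold dtN
    simp only [map_sub, map_smul, hJJ, inner_sub_left, inner_sub_right, inner_smul_left, inner_smul_right, hJn, inner_neg_left, inner_neg_right, p1, p2, q1, hxJ]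
    simp
  rw [r, a1]; ring

theorem dtN_perp (hJ : ∀ x y, inner ℝ (J x) y = - inner ℝ x (J y)) (hJJ : ∀ x, J (J x) = - x)
    {σ : ℝ × ℝ → E} (hσ : ContDiff ℝ (⊤ : ℕ∞) σ) (h1 : ∀ p, ‖σ p‖ = 1) (v p : ℝ × ℝ) :
    inner ℝ (σ p) (dtN J σ v p) = 0 ∧ inner ℝ (J (σ p)) (dtN J σ v p) = 0 := by
  have p1 := dt_perp hσ h1 v p
  have n1 : inner ℝ (σ p) (σ p) = 1 := by rw [real_inner_self_eq_norm_sq, h1]; norm_num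
  have hxJ : inner ℝ (σ p) (J (σ p)) = 0 := by
    have := hJ (σ p) (σ p)
    rw [real_inner_comm] at this
    linarith
  unfold dtN
  rw [inner_sub_right, inner_sub_right, inner_smul_right, inner_smul_right, p1, hxJ, hJ (σ p) (J (σ p)), hJJ, inner_neg_right, n1]
  simp [dtA]

theorem dt_normJ (hJ : ∀ x y, inner ℝ (J x) y = - inner ℝ x (J y)) (hJJ : ∀ x, J (J x) = - x) (x : E) : ‖J x‖ = ‖x‖ := by
  have : ‖J x‖ ^ 2 = ‖x‖ ^ 2 := by
    rw [← real_inner_self_eq_norm_sq, ← real_inner_self_eq_norm_sq, hJ, hJJ]; simp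
  exact (sq_eq_sq₀ (norm_nonneg _) (norm_nonneg _)).1 this

theorem dt_slice2 (hJ : ∀ x y, inner ℝ (J x) y = - inner ℝ x (J y)) (hJJ : ∀ x, J (J x) = - x)
    {σ : ℝ × ℝ → E} (hσ : ContDiff ℝ (⊤ : ℕ∞) σ) (h1 : ∀ p, ‖σ p‖ = 1)
    (hper : ∀ p, σ (p + (1, 0)) = σ p) (hanti : ∀ p, σ (p + (0, 1)) = - σ p)
    (hmean : ∫ s in (0:ℝ)..1, ∫ t in (0:ℝ)..1, dtA J σ (0, 1) (s, t) = 0) :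
    (∫ s in (0:ℝ)..1, ∫ t in (0:ℝ)..1, inner ℝ (J (dtN J σ (1, 0) (s, t))) (dtN J σ (0, 1) (s, t)) = 0) ∧
    (Real.pi ≤ (∫ s in (0:ℝ)..1, ∫ t in (0:ℝ)..1, ‖dtN J σ (0, 1) (s, t)‖) +
      ∫ s in (0:ℝ)..1, ∫ t in (0:ℝ)..1, ‖dtN J σ (1, 0) (s, t)‖ * ‖dtN J σ (0, 1) (s, t)‖) ∧
    (Real.pi ^ 2 ≤ (∫ s in (0:ℝ)..1, ∫ t in (0:ℝ)..1, ‖dtN J σ (0, 1) (s, t)‖ ^ 2) +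
      25/16 * ∫ s in (0:ℝ)..1, ∫ t in (0:ℝ)..1, ‖dtN J σ (1, 0) (s, t)‖ ^ 2) := by
  set X : ℝ × ℝ → E := dtN J σ (1, 0) with hXdef
  set T : ℝ × ℝ → E := dtN J σ (0, 1) with hTdef
  have hXc : Continuous X := (dtN_contDiff hσ _).continuous
  have hTc : Continuous T := (dtN_contDiff hσ _).continuous
  have hAt := dtA_contDiff (J := J) hσ (0, 1)
  have hAs := dtA_contDiff (J := J) hσ (1, 0)
  set h : ℝ → ℝ := fun s => ∫ t in (0:ℝ)..1, dtA J σ (0, 1) (s, t) with hh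
  set h' : ℝ → ℝ := fun s => ∫ t in (0:ℝ)..1, fderiv ℝ (dtA J σ (0, 1)) (s, t) (1, 0) with hh'
  have hd : ∀ s, HasDerivAt h (h' s) s := fun s => dt_hasDerivAt_param _ hAt s
  have hXTc : Continuous fun p => inner ℝ (J (X p)) (T p) := (J.continuous.comp hXc).inner hTc
  have hh'eq : ∀ s, h' s = ∫ t in (0:ℝ)..1, 2 * inner ℝ (J (X (s, t))) (T (s, t)) := by
    intro s
    have e : ∀ t, fderiv ℝ (dtA J σ (0, 1)) (s, t) (1, 0) = fderiv ℝ (dtA J σ (1, 0)) (s, t) (0, 1) + 2 * inner ℝ (J (X (s, t))) (T (s, t)) := by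
      intro t
      have := dt_curv hJ hJJ hσ h1 (1, 0) (0, 1) (s, t)
      linarith
    have c1 : Continuous fun t => fderiv ℝ (dtA J σ (1, 0)) (s, t) (0, 1) := 
      (dt_contDiff_fderiv _ hAs _).continuous.comp (by fun_prop : Continuous fun t : ℝ => (s, t))
    have c2 : Continuous fun t => 2 * inner ℝ (J (X (s, t))) (T (s, t)) := 
      continuous_const.mul (hXTc.comp (by fun_prop : Continuous fun t : ℝ => (s, t)))
    simp only [hh', e]
    rw [integral_add (c1.intervalIntegrable _ _) (c2.intervalIntegrable _ _)]
    have := integral_eq_sub_of_hasDerivAt (a := 0) (b := 1) (fun t _ => dt_hasDerivAt_snd (dtA J σ (1, 0)) (hAs.differentiable (by simp)) s t) (c1.intervalIntegrable _ _)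
    rw [this]
    have : dtA J σ (1, 0) (s, 1) = dtA J σ (1, 0) (s, 0) := by
      have e1 : ((s, 1) : ℝ × ℝ) = (s, 0) + (0, 1) := by simp
      unfold dtA
      rw [e1, dt_fderiv_shift_neg σ _ hanti, hanti]
      simp
    rw [this]; simp
  have hh'c : Continuous h' := dt_cont_param _ (dt_contDiff_fderiv _ hAt _).continuous
  have hhper : h 1 = h 0 := by
    simp only [hh]
    congr 1
    funext t
    have e1 : ((1, t) : ℝ × ℝ) = (0, t) + (1, 0) := by simp
    unfold dtA
    rw [e1, dt_fderiv_shift σ _ hper, hper]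
  have hXT : ∀ p, |inner ℝ (J (X p)) (T p)| ≤ ‖X p‖ * ‖T p‖ := by
    intro p
    have := abs_real_inner_le_norm (J (X p)) (T p)
    rwa [dt_normJ hJ hJJ] at this
  have cs : ∀ {f : ℝ × ℝ → ℝ} (hf : Continuous f) (s : ℝ), IntervalIntegrable (fun t => f (s, t)) MeasureTheory.volume 0 1 := 
    fun hf s => (hf.comp (by fun_prop : Continuous fun t : ℝ => (s, t))).intervalIntegrable _ _
  have habs : ∀ s, |h' s| ≤ ∫ t in (0:ℝ)..1, 2 * (‖X (s, t)‖ * ‖T (s, t)‖) := by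
    intro s
    rw [hh'eq]
    refine (abs_integral_le_integral_abs zero_le_one).trans ?_
    apply integral_mono_on zero_le_one (cs (f := fun p => |2 * inner ℝ (J (X p)) (T p)|) (by fun_prop) s) (cs (f := fun p => 2 * (‖X p‖ * ‖T p‖)) (by fun_prop) s)
    intro t _
    rw [abs_mul, abs_of_pos (by norm_num : (0:ℝ) < 2)]
    linarith [hXT (s, t)]
  have hsl := fun s => dt_slice J hJ hJJ (fun t => σ (s, t)) (fun t => fderiv ℝ σ (s, t) (0, 1)) (fun t => dt_hasDerivAt_snd σ (hσ.differentiable (by simp)) s t)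
    ((dt_contDiff_fderiv σ hσ _).continuous.comp (by fun_prop : Continuous fun t : ℝ => (s, t))) (fun t => h1 _) (by have := hanti (s, 0); simpa using this)
    (fun t => dtA J σ (0, 1) (s, t)) (fun t => rfl) (fun t => T (s, t)) (fun t => rfl) (h s) rfl
  refine ⟨?_, ?_, ?_⟩
  · have := integral_eq_sub_of_hasDerivAt (a := 0) (b := 1) (fun s _ => hd s) (hh'c.intervalIntegrable _ _)
    rw [hhper, sub_self] at this
    simp only [hh'eq, intervalIntegral.integral_const_mul] at this
    linarith
  · have hm : ∀ s ∈ Set.Icc (0:ℝ) 1, |h s| ≤ ∫ s in (0:ℝ)..1, ∫ t in (0:ℝ)..1, ‖X (s, t)‖ * ‖T (s, t)‖ := by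
      intro s hs
      refine (dt_mean_osc h h' hd hh'c hhper hmean s hs).trans ?_
      have : ∫ s in (0:ℝ)..1, |h' s| ≤ ∫ s in (0:ℝ)..1, ∫ t in (0:ℝ)..1, 2 * (‖X (s, t)‖ * ‖T (s, t)‖) := by
        apply integral_mono_on zero_le_one (hh'c.abs.intervalIntegrable _ _) ((dt_cont_param (fun p => 2 * (‖X p‖ * ‖T p‖)) (by fun_prop)).intervalIntegrable _ _)
        intro s _
        exact habs s
      simp only [intervalIntegral.integral_const_mul] at this
      linarith
    set K := ∫ s in (0:ℝ)..1, ∫ t in (0:ℝ)..1, ‖X (s, t)‖ * ‖T (s, t)‖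
    have : ∫ s in (0:ℝ)..1, (Real.pi - K) ≤ ∫ s in (0:ℝ)..1, ∫ t in (0:ℝ)..1, ‖T (s, t)‖ := by
      apply integral_mono_on zero_le_one (by simp) ((dt_cont_param (fun p => ‖T p‖) (by fun_prop)).intervalIntegrable _ _)
      intro s hs
      linarith [(hsl s).1, hm s hs]
    simp at this
    linarith
  · refine dt_oneD h h' (fun s => ∫ t in (0:ℝ)..1, ‖T (s, t)‖ ^ 2) (fun s => ∫ t in (0:ℝ)..1, ‖X (s, t)‖ ^ 2) hd hh'c hhper hmean 
      (dt_cont_param (fun p => ‖T p‖ ^ 2) (by fun_prop)) (dt_cont_param (fun p => ‖X p‖ ^ 2) (by fun_prop)) 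
      (fun s => integral_nonneg zero_le_one fun _ _ => by positivity) (fun s => integral_nonneg zero_le_one fun _ _ => by positivity) (fun s => (hsl s).2) ?_
    intro s κ hκ
    have : ∫ t in (0:ℝ)..1, 5/4 * κ * (2 * (‖X (s, t)‖ * ‖T (s, t)‖)) ≤ ∫ t in (0:ℝ)..1, (25/16 * ‖X (s, t)‖^2 + κ ^ 2 * ‖T (s, t)‖^2) := by
      apply integral_mono_on zero_le_one (cs (f := fun p => 5/4 * κ * (2 * (‖X p‖ * ‖T p‖))) (by fun_prop) s) (cs (f := fun p => 25/16 * ‖X p‖^2 + κ^2 * ‖T p‖ ^ 2) (by fun_prop) s)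
      intro t _
      nlinarith [sq_nonneg (5/4 * ‖X (s, t)‖ - κ * ‖T (s, t)‖)]
    rw [integral_add (cs (f := fun p => 25/16 * ‖X p‖^2) (by fun_prop) s) (cs (f := fun p => κ^2 * ‖T p‖^2) (by fun_prop) s), intervalIntegral.integral_const_mul, intervalIntegral.integral_const_mul, intervalIntegral.integral_const_mul, intervalIntegral.integral_const_mul] at this
    refine le_trans ?_ this
    have := habs s
    rw [intervalIntegral.integral_const_mul] at this
    gcongr
end slice2


/-- mean over the torus -/
noncomputable def dtM (b : ℝ) (f : ℝ × ℝ → ℝ) : ℝ := ∫ t in (0:ℝ)..1, ∫ s in (0:ℝ)..1, f (s, t * b)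

section M
variable {b : ℝ} {f g : ℝ × ℝ → ℝ}

theorem dtM_inner (hf : Continuous f) (t : ℝ) : IntervalIntegrable (fun s => f (s, t * b)) MeasureTheory.volume 0 1 :=
  (hf.comp (by fun_prop : Continuous fun s : ℝ => (s, t * b))).intervalIntegrable _ _

theorem dtM_outer (hf : Continuous f) : Continuous (fun t => ∫ s in (0:ℝ)..1, f (s, t * b)) :=
  dt_cont_param (fun p => f (p.2, p.1 * b)) (by fun_prop)

theorem dtM_add (hf : Continuous f) (hg : Continuous g) : dtM b (fun p => f p + g p) = dtM b f + dtM b g := by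
  unfold dtM
  rw [← integral_add ((dtM_outer hf).intervalIntegrable _ _) ((dtM_outer hg).intervalIntegrable _ _)]
  congr 1; funext t
  exact integral_add (dtM_inner hf t) (dtM_inner hg t)

theorem dtM_const_mul (c : ℝ) : dtM b (fun p => c * f p) = c * dtM b f := by
  unfold dtM
  simp only [intervalIntegral.integral_const_mul]

theorem dtM_const (c : ℝ) : dtM b (fun _ => c) = c := by
  simp [dtM]

theorem dtM_mono (hf : Continuous f) (hg : Continuous g) (h : ∀ p, f p ≤ g p) : dtM b f ≤ dtM b g := by
  unfold dtM
  apply integral_mono_on zero_le_one ((dtM_outer hf).intervalIntegrable _ _) ((dtM_outer hg).intervalIntegrable _ _)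
  intro t _
  apply integral_mono_on zero_le_one (dtM_inner hf t) (dtM_inner hg t)
  intro s _
  exact h _

theorem dtM_shear (c : ℝ) (hf : Continuous f) (hper : ∀ p, f (p + (1, 0)) = f p) :
    ∫ s in (0:ℝ)..1, ∫ t in (0:ℝ)..1, f (s + t * c, t * b) = dtM b f := by
  rw [MeasureTheory.intervalIntegral_intervalIntegral_swap (F := fun s t => f (s + t * c, t * b))]
  · unfold dtM
    congr 1; funext t
    have hp : Function.Periodic (fun s => f (s, t * b)) 1 := by
      intro s
      have := hper (s, t * b)
      simpa using this
    rw [integral_comp_add_right (fun s => f (s, t * b))]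
    have := hp.intervalIntegral_add_eq (t * c) 0
    simp only [zero_add] at this ⊢
    rw [add_comm]
    exact this
  · have : Continuous (Function.uncurry fun s t => f (s + t * c, t * b)) := by
      unfold Function.uncurry; fun_prop
    rw [Set.uIoc_of_le zero_le_one]
    exact (this.continuousOn.integrableOn_compact (isCompact_Icc.prod isCompact_Icc)).mono_set (Set.prod_mono Set.Ioc_subset_Icc_self Set.Ioc_subset_Icc_self)

theorem dtM_dx {v : ℝ × ℝ → ℝ} (hv : ContDiff ℝ (⊤ : ℕ∞) v) (hper : ∀ p, v (p + (1, 0)) = v p) :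
    dtM b (fun p => fderiv ℝ v p (1, 0)) = 0 := by
  unfold dtM
  have : ∀ t, ∫ s in (0:ℝ)..1, fderiv ℝ v (s, t * b) (1, 0) = 0 := by
    intro t
    rw [integral_eq_sub_of_hasDerivAt (fun s _ => dt_hasDerivAt_fst v (hv.differentiable (by simp)) s (t * b)) (dtM_inner (dt_contDiff_fderiv v hv (1,0)).continuous t)]
    have := hper (0, t * b)
    simp at this
    simp [this]
  simp [this]

theorem dtM_dcb {v : ℝ × ℝ → ℝ} (c : ℝ) (hv : ContDiff ℝ (⊤ : ℕ∞) v) (hper : ∀ p, v (p + (1, 0)) = v p)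
    (hper2 : ∀ p, v (p + (c, b)) = v p) :
    dtM b (fun p => fderiv ℝ v p (c, b)) = 0 := by
  have hcont := (dt_contDiff_fderiv v hv (c,b)).continuous
  rw [← dtM_shear c hcont (fun p => by rw [dt_fderiv_shift v _ hper])]
  have : ∀ s, ∫ t in (0:ℝ)..1, fderiv ℝ v (s + t * c, t * b) (c, b) = 0 := by
    intro s
    have hd : ∀ t, HasDerivAt (fun t : ℝ => v (s + t * c, t * b)) (fderiv ℝ v (s + t * c, t * b) (c, b)) t := by
      intro t
      have h : HasDerivAt (fun t : ℝ => (s + t * c, t * b)) (c, b) t := by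
        have h1 : HasDerivAt (fun t : ℝ => s + t * c) c t := by simpa using ((hasDerivAt_id t).mul_const c).const_add s
        have h2 : HasDerivAt (fun t : ℝ => t * b) b t := by simpa using ((hasDerivAt_id t).mul_const b)
        exact h1.prodMk h2
      exact (hv.differentiable (by simp) _).hasFDerivAt.comp_hasDerivAt t h
    rw [integral_eq_sub_of_hasDerivAt (fun t _ => hd t) ((hcont.comp (by fun_prop : Continuous fun t : ℝ => (s + t * c, t * b))).intervalIntegrable _ _)]
    have := hper2 (s, 0)
    simp at this
    simp [this]
  simp [this]
end M

section torus
variable {E : Type*} [NormedAddCommGroup E] [InnerProductSpace ℝ E] {J : E →L[ℝ] E}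

theorem dtA_lin (σ : ℝ × ℝ → E) (x y : ℝ) (p : ℝ × ℝ) : dtA J σ (x, y) p = x * dtA J σ (1, 0) p + y * dtA J σ (0, 1) p := by
  have e : ((x, y) : ℝ × ℝ) = x • (1, 0) + y • (0, 1) := by simp
  unfold dtA
  rw [e, map_add, map_smul, map_smul, inner_add_right, inner_smul_right, inner_smul_right]

theorem dtN_lin (σ : ℝ × ℝ → E) (x y : ℝ) (p : ℝ × ℝ) : dtN J σ (x, y) p = x • dtN J σ (1, 0) p + y • dtN J σ (0, 1) p := by
  have e : ((x, y) : ℝ × ℝ) = x • (1, 0) + y • (0, 1) := by simp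
  have h : fderiv ℝ σ p (x, y) = x • fderiv ℝ σ p (1, 0) + y • fderiv ℝ σ p (0, 1) := by rw [e, map_add, map_smul, map_smul]
  unfold dtN
  rw [h, dtA_lin]
  module

theorem dt_shear (hJ : ∀ x y, inner ℝ (J x) y = - inner ℝ x (J y)) (hJJ : ∀ x, J (J x) = - x)
    {σ : ℝ × ℝ → E} (hσ : ContDiff ℝ (⊤ : ℕ∞) σ) (h1 : ∀ p, ‖σ p‖ = 1) (b c : ℝ)
    (hper : ∀ p, σ (p + (1, 0)) = σ p) (hanti : ∀ p, σ (p + (c, b)) = - σ p)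
    (hmean : dtM b (dtA J σ (c, b)) = 0) :
    (dtM b (fun p => inner ℝ (J (dtN J σ (1, 0) p)) (dtN J σ (c, b) p)) = 0) ∧
    (Real.pi ≤ dtM b (fun p => ‖dtN J σ (c, b) p‖) +
      dtM b (fun p => ‖dtN J σ (1, 0) p‖ * ‖dtN J σ (c, b) p‖)) ∧
    (Real.pi ^ 2 ≤ dtM b (fun p => ‖dtN J σ (c, b) p‖ ^ 2) +
      25/16 * dtM b (fun p => ‖dtN J σ (1, 0) p‖ ^ 2)) := by
  set L : ℝ × ℝ →L[ℝ] ℝ × ℝ := (ContinuousLinearMap.fst ℝ ℝ ℝ + c • ContinuousLinearMap.snd ℝ ℝ ℝ).prod (b • ContinuousLinearMap.snd ℝ ℝ ℝ) with hL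
  have hLa : ∀ s t : ℝ, L (s, t) = (s + t * c, t * b) := by
    intro s t; simp [hL, mul_comm]
  have hfd : ∀ p w, fderiv ℝ (σ ∘ L) p w = fderiv ℝ σ (L p) (L w) := by
    intro p w
    rw [fderiv_comp p (hσ.differentiable (by simp) _) L.differentiableAt]
    simp
  have hA : ∀ p w, dtA J (σ ∘ L) w p = dtA J σ (L w) (L p) := by
    intro p w; unfold dtA; rw [hfd]; rfl
  have hN : ∀ p w, dtN J (σ ∘ L) w p = dtN J σ (L w) (L p) := by
    intro p w; unfold dtN; rw [hfd, hA]; rfl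
  have hL1 : L (1, 0) = (1, 0) := by simp [hLa]
  have hL2 : L (0, 1) = (c, b) := by simp [hLa]
  have hAper : ∀ w p, dtA J σ w (p + (1, 0)) = dtA J σ w p := by
    intro w p; unfold dtA; rw [dt_fderiv_shift σ _ hper, hper]
  have hNper : ∀ w p, dtN J σ w (p + (1, 0)) = dtN J σ w p := by
    intro w p; unfold dtN; rw [hAper, dt_fderiv_shift σ _ hper, hper]
  have hAc : ∀ w, Continuous (dtA J σ w) := fun w => (dtA_contDiff hσ w).continuous
  have hNc : ∀ w, Continuous (dtN J σ w) := fun w => (dtN_contDiff hσ w).continuous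
  have key := dt_slice2 hJ hJJ (σ := σ ∘ L) (hσ.comp L.contDiff) (fun p => h1 _)
    (fun p => by simp only [Function.comp, map_add, hL1, hper]) (fun p => by simp only [Function.comp, map_add, hL2, hanti])
    (by simp only [hA, hL2, hLa]
        rw [dtM_shear c (hAc (c, b)) (hAper (c, b))]; exact hmean)
  simp only [hN, hL1, hL2, hLa] at key
  rw [dtM_shear c (f := fun p => inner ℝ (J (dtN J σ (1, 0) p)) (dtN J σ (c, b) p)) ((J.continuous.comp (hNc _)).inner (hNc _)) (fun p => by simp only [hNper]),
    dtM_shear c (f := fun p => ‖dtN J σ (c, b) p‖) (hNc _).norm (fun p => by simp only [hNper]),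
    dtM_shear c (f := fun p => ‖dtN J σ (1, 0) p‖ * ‖dtN J σ (c, b) p‖) ((hNc _).norm.mul (hNc _).norm) (fun p => by simp only [hNper]),
    dtM_shear c (f := fun p => ‖dtN J σ (c, b) p‖ ^ 2) ((hNc _).norm.pow 2) (fun p => by simp only [hNper]),
    dtM_shear c (f := fun p => ‖dtN J σ (1, 0) p‖ ^ 2) ((hNc _).norm.pow 2) (fun p => by simp only [hNper])] at key
  exact key

theorem dt_torus (hJ : ∀ x y, inner ℝ (J x) y = - inner ℝ x (J y)) (hJJ : ∀ x, J (J x) = - x)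
    {σ : ℝ × ℝ → E} (hσ : ContDiff ℝ (⊤ : ℕ∞) σ) (h1 : ∀ p, ‖σ p‖ = 1) (a b : ℝ) (ha : |a| ≤ 1/2) (hb : 0 < b)
    (hper : ∀ p, σ (p + (1, 0)) = σ p) (hanti : ∀ p, σ (p + (a, b)) = - σ p)
    {v : ℝ × ℝ → ℝ} (hv : ContDiff ℝ (⊤ : ℕ∞) v) (hv1 : ∀ p, v (p + (1, 0)) = v p) (hv2 : ∀ p, v (p + (a, b)) = v p)
    (hAx : ∀ p, dtA J σ (1, 0) p = - fderiv ℝ v p (0, 1)) (hAy : ∀ p, dtA J σ (0, 1) p = fderiv ℝ v p (1, 0)) :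
    (dtM b (fun p => inner ℝ (J (dtN J σ (1, 0) p)) (dtN J σ (0, 1) p)) = 0) ∧
    (Real.pi ≤ |a| * dtM b (fun p => ‖dtN J σ (1, 0) p‖) + b * dtM b (fun p => ‖dtN J σ (0, 1) p‖) +
      |a| * dtM b (fun p => ‖dtN J σ (1, 0) p‖ ^ 2) + b * dtM b (fun p => ‖dtN J σ (1, 0) p‖ * ‖dtN J σ (0, 1) p‖)) ∧
    (Real.pi ^ 2 ≤ b ^ 2 * dtM b (fun p => ‖dtN J σ (0, 1) p‖ ^ 2) +
      29/16 * dtM b (fun p => ‖dtN J σ (1, 0) p‖ ^ 2)) := by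
  have hAc : ∀ w, Continuous (dtA J σ w) := fun w => (dtA_contDiff hσ w).continuous
  have hNc : ∀ w, Continuous (dtN J σ w) := fun w => (dtN_contDiff hσ w).continuous
  have hvc : ∀ w, Continuous (fun p => fderiv ℝ v p w) := fun w => (dt_contDiff_fderiv v hv w).continuous
  have m1 : dtM b (fun p => fderiv ℝ v p (1, 0)) = 0 := dtM_dx hv hv1
  have m2 : dtM b (fun p => fderiv ℝ v p (0, 1)) = 0 := by
    have h := dtM_dcb a hv hv1 hv2
    have e : (fun p => fderiv ℝ v p (a, b)) = fun p => a * fderiv ℝ v p (1, 0) + b * fderiv ℝ v p (0, 1) := by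
      funext p
      have e : ((a, b) : ℝ × ℝ) = a • (1, 0) + b • (0, 1) := by simp
      rw [e, map_add, map_smul, map_smul]; rfl
    have c1 := hvc (1,0)
    have c2 := hvc (0,1)
    rw [e, dtM_add (by fun_prop) (by fun_prop), dtM_const_mul, dtM_const_mul, m1] at h
    simp [hb.ne'] at h
    exact h
  have hmean : ∀ c, dtM b (dtA J σ (c, b)) = 0 := by
    intro c
    have e : dtA J σ (c, b) = fun p => (-c) * fderiv ℝ v p (0, 1) + b * fderiv ℝ v p (1, 0) := by
      funext p
      rw [dtA_lin, hAx, hAy]; ring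
    have c1 := hvc (1,0)
    have c2 := hvc (0,1)
    rw [e, dtM_add (by fun_prop) (by fun_prop), dtM_const_mul, dtM_const_mul, m1, m2]; simp
  have hxJ : ∀ x, inner ℝ (J x) x = 0 := by
    intro x
    have := hJ x x
    have h2 := real_inner_comm (J x) x
    linarith
  set X := dtN J σ (1, 0) with hX
  set Y := dtN J σ (0, 1) with hY
  have cX : Continuous X := hNc _
  have cY : Continuous Y := hNc _
  have cXY : Continuous fun p => inner ℝ (X p) (Y p) := cX.inner cY
  have K0 := dt_shear hJ hJJ hσ h1 b a hper hanti (hmean a)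
  have expand : ∀ c, dtM b (fun p => ‖dtN J σ (c, b) p‖ ^ 2) = c^2 * dtM b (fun p => ‖X p‖^2) + 2*c*b * dtM b (fun p => inner ℝ (X p) (Y p)) + b^2 * dtM b (fun p => ‖Y p‖^2) := by
    intro c
    have e : (fun p => ‖dtN J σ (c, b) p‖ ^ 2) = fun p => (c^2 * ‖X p‖^2 + 2*c*b * inner ℝ (X p) (Y p)) + b^2 * ‖Y p‖^2 := by
      funext p
      rw [dtN_lin, norm_add_sq_real, norm_smul, norm_smul, inner_smul_left, inner_smul_right, mul_pow, mul_pow]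
      simp only [Real.norm_eq_abs, sq_abs, conj_trivial, hX, hY]
      ring
    rw [e, dtM_add (by fun_prop) (by fun_prop), dtM_add (by fun_prop) (by fun_prop), dtM_const_mul, dtM_const_mul, dtM_const_mul]
  refine ⟨?_, ?_, ?_⟩
  · have e : (fun p => inner ℝ (J (X p)) (dtN J σ (a, b) p)) = fun p => b * inner ℝ (J (X p)) (Y p) := by
      funext p
      rw [dtN_lin, inner_add_right, inner_smul_right, inner_smul_right, hxJ]; simp [hY]
    have := K0.1
    rw [e, dtM_const_mul] at this
    simpa [hb.ne'] using this
  · have hn : ∀ p, ‖dtN J σ (a, b) p‖ ≤ |a| * ‖X p‖ + b * ‖Y p‖ := by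
      intro p
      rw [dtN_lin]
      refine (norm_add_le _ _).trans ?_
      rw [norm_smul, norm_smul, Real.norm_eq_abs, Real.norm_eq_abs, abs_of_pos hb]
    have e1 : dtM b (fun p => ‖dtN J σ (a, b) p‖) ≤ |a| * dtM b (fun p => ‖X p‖) + b * dtM b (fun p => ‖Y p‖) := by
      rw [← dtM_const_mul, ← dtM_const_mul, ← dtM_add (by fun_prop) (by fun_prop)]
      exact dtM_mono (hNc _).norm (by fun_prop) hn
    have e2 : dtM b (fun p => ‖X p‖ * ‖dtN J σ (a, b) p‖) ≤ |a| * dtM b (fun p => ‖X p‖ ^ 2) + b * dtM b (fun p => ‖X p‖ * ‖Y p‖) := by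
      rw [← dtM_const_mul, ← dtM_const_mul, ← dtM_add (by fun_prop) (by fun_prop)]
      refine dtM_mono (cX.norm.mul (hNc _).norm) (by fun_prop) ?_
      intro p
      have := mul_le_mul_of_nonneg_left (hn p) (norm_nonneg (X p))
      linarith
    linarith [K0.2.1]
  · have mX : 0 ≤ dtM b (fun p => ‖X p‖^2) := by
      have := dtM_mono (b := b) (f := fun _ => 0) (g := fun p => ‖X p‖^2) continuous_const (by fun_prop) (fun p => by positivity)
      rwa [dtM_const] at this
    have k0 := K0.2.2
    rw [expand] at k0
    rcases le_or_gt 0 a with h0 | h0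
    · rw [abs_of_nonneg h0] at ha
      have K1 := (dt_shear hJ hJJ hσ h1 b (a-1) hper (fun p => by
        rw [← hper (p + (a - 1, b)), ← hanti p]; congr 1; ext <;> simp; ring) (hmean (a-1))).2.2
      rw [expand] at K1
      have := add_le_add (mul_le_mul_of_nonneg_left k0 (by linarith : 0 ≤ 1 - a)) (mul_le_mul_of_nonneg_left K1 h0)
      have h4 : (a * (1-a)) * dtM b (fun p => ‖X p‖^2) ≤ 1/4 * dtM b (fun p => ‖X p‖^2) :=
        mul_le_mul_of_nonneg_right (by nlinarith [sq_nonneg (a - 1/2)]) mX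
      nlinarith
    · rw [abs_of_neg h0] at ha
      have K1 := (dt_shear hJ hJJ hσ h1 b (a+1) hper (fun p => by
        rw [← hanti p, ← hper (p + (a, b))]; congr 1; ext <;> simp; ring) (hmean (a+1))).2.2
      rw [expand] at K1
      have := add_le_add (mul_le_mul_of_nonneg_left k0 (by linarith : 0 ≤ 1 + a)) (mul_le_mul_of_nonneg_left K1 (by linarith : 0 ≤ -a))
      have h4 : ((-a) * (1+a)) * dtM b (fun p => ‖X p‖^2) ≤ 1/4 * dtM b (fun p => ‖X p‖^2) :=
        mul_le_mul_of_nonneg_right (by nlinarith [sq_nonneg (a + 1/2)]) mX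
      nlinarith
end torus


/-- Laplacian -/
noncomputable def dtLap (v : ℝ × ℝ → ℝ) (p : ℝ × ℝ) : ℝ :=
  fderiv ℝ (fun p => fderiv ℝ v p (1, 0)) p (1, 0) + fderiv ℝ (fun p => fderiv ℝ v p (0, 1)) p (0, 1)

theorem dt_lin (f : ℝ × ℝ → ℝ) (x y : ℝ) (p : ℝ × ℝ) : fderiv ℝ f p (x, y) = x * fderiv ℝ f p (1, 0) + y * fderiv ℝ f p (0, 1) := by
  have e : ((x, y) : ℝ × ℝ) = x • (1, 0) + y • (0, 1) := by simp
  rw [e, map_add, map_smul, map_smul]; rfl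

theorem dt_hasDerivAt_param' (f f' : ℝ × ℝ → ℝ) (hf : Continuous f) (hf' : Continuous f') (α β : ℝ)
    (hd : ∀ s t, HasDerivAt (fun s => f (s, t)) (f' (s, t)) s) (s : ℝ) :
    HasDerivAt (fun s => ∫ t in α..β, f (s, t)) (∫ t in α..β, f' (s, t)) s := by
  obtain ⟨C, hC⟩ := (isCompact_Icc.prod isCompact_uIcc : IsCompact (Set.Icc (s-1) (s+1) ×ˢ Set.uIcc α β)).exists_bound_of_continuousOn hf'.continuousOn
  refine (intervalIntegral.hasDerivAt_integral_of_dominated_loc_of_deriv_le (F := fun s t => f (s, t)) (F' := fun s t => f' (s, t)) (bound := fun _ => C) (s := Set.Icc (s-1) (s+1)) (Icc_mem_nhds (by linarith) (by linarith)) ?_ ?_ ?_ ?_ ?_ ?_).2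
  · exact Filter.Eventually.of_forall fun x => (by fun_prop : Continuous fun t => f (x, t)).aestronglyMeasurable
  · exact (by fun_prop : Continuous fun t => f (s, t)).intervalIntegrable _ _
  · exact (hf'.comp (by fun_prop : Continuous fun t : ℝ => (s, t))).aestronglyMeasurable
  · refine Filter.Eventually.of_forall fun t ht x hx => hC _ ⟨hx, ?_⟩
    exact Set.uIoc_subset_uIcc ht
  · simp
  · exact Filter.Eventually.of_forall fun t _ x _ => hd x t

theorem dt_circle (v : ℝ × ℝ → ℝ) (hv : ContDiff ℝ (⊤ : ℕ∞) v) (K : ℝ) (hK : 0 ≤ K)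
    (hlap : ∀ p, -K ≤ dtLap v p) (p : ℝ × ℝ) (r : ℝ) (hr : 0 ≤ r) :
    2 * Real.pi * v p - Real.pi * K * r ^ 2 / 2 ≤ ∫ θ in (-Real.pi)..Real.pi, v (p.1 + r * Real.cos θ, p.2 + r * Real.sin θ) := by
  have hpi := Real.pi_pos
  set vx : ℝ × ℝ → ℝ := fun p => fderiv ℝ v p (1, 0) with hvx
  set vy : ℝ × ℝ → ℝ := fun p => fderiv ℝ v p (0, 1) with hvy
  have dvx : ContDiff ℝ (⊤ : ℕ∞) vx := dt_contDiff_fderiv v hv _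
  have dvy : ContDiff ℝ (⊤ : ℕ∞) vy := dt_contDiff_fderiv v hv _
  have cvx := dvx.continuous
  have cvy := dvy.continuous
  have cv := hv.continuous
  have cxx : Continuous fun p => fderiv ℝ vx p (1, 0) := (dt_contDiff_fderiv vx dvx _).continuous
  have cxy : Continuous fun p => fderiv ℝ vx p (0, 1) := (dt_contDiff_fderiv vx dvx _).continuous
  have cyy : Continuous fun p => fderiv ℝ vy p (0, 1) := (dt_contDiff_fderiv vy dvy _).continuous
  have hsym : ∀ p, fderiv ℝ vy p (1, 0) = fderiv ℝ vx p (0, 1) := fun p => dt_fderiv_comm v hv _ _ p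
  set P : ℝ × ℝ → ℝ × ℝ := fun z => (p.1 + z.1 * Real.cos z.2, p.2 + z.1 * Real.sin z.2) with hP
  have cP : Continuous P := by fun_prop
  have dr : ∀ (f : ℝ × ℝ → ℝ) (hf : ContDiff ℝ (⊤ : ℕ∞) f) (s t : ℝ), HasDerivAt (fun s => f (P (s, t))) (Real.cos t * fderiv ℝ f (P (s, t)) (1, 0) + Real.sin t * fderiv ℝ f (P (s, t)) (0, 1)) s := by
    intro f hf s t
    have h : HasDerivAt (fun s => P (s, t)) (Real.cos t, Real.sin t) s := by
      have h1 : HasDerivAt (fun s : ℝ => p.1 + s * Real.cos t) (Real.cos t) s := by simpa using ((hasDerivAt_id s).mul_const (Real.cos t)).const_add p.1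
      have h2 : HasDerivAt (fun s : ℝ => p.2 + s * Real.sin t) (Real.sin t) s := by simpa using ((hasDerivAt_id s).mul_const (Real.sin t)).const_add p.2
      exact h1.prodMk h2
    rw [← dt_lin]
    exact (hf.differentiable (by simp) _).hasFDerivAt.comp_hasDerivAt s h
  have dth : ∀ (f : ℝ × ℝ → ℝ) (hf : ContDiff ℝ (⊤ : ℕ∞) f) (s t : ℝ), HasDerivAt (fun t => f (P (s, t))) (s * -Real.sin t * fderiv ℝ f (P (s, t)) (1, 0) + s * Real.cos t * fderiv ℝ f (P (s, t)) (0, 1)) t := by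
    intro f hf s t
    have h : HasDerivAt (fun t => P (s, t)) (s * -Real.sin t, s * Real.cos t) t := by
      exact (((Real.hasDerivAt_cos t).const_mul s).const_add p.1).prodMk (((Real.hasDerivAt_sin t).const_mul s).const_add p.2)
    rw [← dt_lin]
    exact (hf.differentiable (by simp) _).hasFDerivAt.comp_hasDerivAt t h
  set G : ℝ × ℝ → ℝ := fun z => Real.cos z.2 * vx (P z) + Real.sin z.2 * vy (P z) with hG
  have cG : Continuous G := by fun_prop
  set lap : ℝ × ℝ → ℝ := fun z => dtLap v (P z) with hlapd
  set W' : ℝ × ℝ → ℝ := fun z => -Real.cos z.2 * vx (P z) - Real.sin z.2 * vy (P z) + z.1 * (Real.sin z.2 ^ 2 * fderiv ℝ vx (P z) (1, 0) - 2 * Real.sin z.2 * Real.cos z.2 * fderiv ℝ vx (P z) (0, 1) + Real.cos z.2 ^ 2 * fderiv ℝ vy (P z) (0, 1)) with hW'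
  have e1 := cxx.comp cP
  have e2 := cxy.comp cP
  have e3 := cyy.comp cP
  simp only [Function.comp_def] at e1 e2 e3
  have cW' : Continuous W' := by
    simp only [hW']
    refine Continuous.add (by fun_prop) (continuous_fst.mul (((Continuous.mul (by fun_prop) e1).sub (Continuous.mul (by fun_prop) e2)).add (Continuous.mul (by fun_prop) e3)))
  have clap : Continuous lap := by simp only [hlapd, dtLap]; exact e1.add e3
  have hW0 : ∀ s, ∫ t in (-Real.pi)..Real.pi, W' (s, t) = 0 := by
    intro s
    have hd : ∀ t, HasDerivAt (fun t => -Real.sin t * vx (P (s, t)) + Real.cos t * vy (P (s, t))) (W' (s, t)) t := by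
      intro t
      have := ((Real.hasDerivAt_sin t).neg.mul (dth vx dvx s t)).add ((Real.hasDerivAt_cos t).mul (dth vy dvy s t))
      refine this.congr_deriv ?_
      simp only [hW', hsym, Pi.neg_apply]
      ring
    rw [integral_eq_sub_of_hasDerivAt (fun t _ => hd t) ((cW'.comp (by fun_prop : Continuous fun t : ℝ => (s, t))).intervalIntegrable _ _)]
    simp [hP]
  have hN : ∀ s, HasDerivAt (fun s => ∫ t in (-Real.pi)..Real.pi, s * G (s, t)) (∫ t in (-Real.pi)..Real.pi, (s * lap (s, t) - W' (s, t))) s := by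
    intro s
    refine dt_hasDerivAt_param' (fun z => z.1 * G z) (fun z => z.1 * lap z - W' z) (by fun_prop) (by fun_prop) _ _ ?_ s
    intro s t
    have h1 := (hasDerivAt_id s).mul (((dr vx dvx s t).const_mul (Real.cos t)).add ((dr vy dvy s t).const_mul (Real.sin t)))
    refine h1.congr_deriv ?_
    simp only [hW', hlapd, hsym, dtLap, id]
    have := Real.sin_sq_add_cos_sq t
    simp only [Pi.add_apply]
    linear_combination (s * fderiv ℝ vx (P (s, t)) (1, 0) + s * fderiv ℝ vy (P (s, t)) (0, 1)) * this
  have hN' : ∀ s, 0 ≤ s → - (2 * Real.pi * K * s) ≤ ∫ t in (-Real.pi)..Real.pi, (s * lap (s, t) - W' (s, t)) := by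
    intro s hs
    have i1 : IntervalIntegrable (fun t => s * lap (s, t)) MeasureTheory.volume (-Real.pi) Real.pi := by
      exact (by fun_prop : Continuous fun t => s * lap (s, t)).intervalIntegrable _ _
    rw [integral_sub i1 ((by fun_prop : Continuous fun t => W' (s, t)).intervalIntegrable _ _), hW0, sub_zero]
    have : ∫ t in (-Real.pi)..Real.pi, (- (K * s)) ≤ ∫ t in (-Real.pi)..Real.pi, s * lap (s, t) := by
      apply integral_mono_on (by linarith) (by simp) i1
      intro t _
      nlinarith [hlap (P (s, t))]
    rw [integral_const] at this
    refine le_trans (le_of_eq ?_) this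
    simp; ring
  have hNlow : ∀ s, 0 ≤ s → - (Real.pi * K * s ^ 2) ≤ ∫ t in (-Real.pi)..Real.pi, s * G (s, t) := by
    intro s hs
    have mono : MonotoneOn (fun s => (∫ t in (-Real.pi)..Real.pi, s * G (s, t)) + Real.pi * K * s ^ 2) (Set.Ici 0) := by
      have hd : ∀ s, HasDerivAt (fun s => (∫ t in (-Real.pi)..Real.pi, s * G (s, t)) + Real.pi * K * s ^ 2) ((∫ t in (-Real.pi)..Real.pi, (s * lap (s, t) - W' (s, t))) + Real.pi * K * (2 * s)) s := by
        intro s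
        have := (hN s).add ((hasDerivAt_pow 2 s).const_mul (Real.pi * K))
        exact this.congr_deriv (by simp)
      apply monotoneOn_of_deriv_nonneg (convex_Ici 0)
      · exact fun s _ => (hd s).continuousAt.continuousWithinAt
      · exact fun s _ => (hd s).differentiableAt.differentiableWithinAt
      · intro s hs
        rw [interior_Ici] at hs
        rw [(hd s).deriv]
        have := hN' s (le_of_lt hs)
        linarith
    have := mono (Set.mem_Ici.2 le_rfl) (Set.mem_Ici.2 hs) hs
    simp only [zero_mul, integral_zero] at this
    linarith
  have hm : ∀ s, HasDerivAt (fun s => ∫ t in (-Real.pi)..Real.pi, v (P (s, t))) (∫ t in (-Real.pi)..Real.pi, G (s, t)) s := by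
    intro s
    refine dt_hasDerivAt_param' (fun z => v (P z)) G (by fun_prop) (by fun_prop) _ _ ?_ s
    exact fun s t => dr v hv s t
  have mono : MonotoneOn (fun s => (∫ t in (-Real.pi)..Real.pi, v (P (s, t))) + Real.pi * K / 2 * s ^ 2) (Set.Ici 0) := by
    have hd : ∀ s, HasDerivAt (fun s => (∫ t in (-Real.pi)..Real.pi, v (P (s, t))) + Real.pi * K / 2 * s ^ 2) ((∫ t in (-Real.pi)..Real.pi, G (s, t)) + Real.pi * K / 2 * (2 * s)) s := by
      intro s
      have := (hm s).add ((hasDerivAt_pow 2 s).const_mul (Real.pi * K / 2))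
      exact this.congr_deriv (by simp)
    apply monotoneOn_of_deriv_nonneg (convex_Ici 0)
    · exact fun s _ => (hd s).continuousAt.continuousWithinAt
    · exact fun s _ => (hd s).differentiableAt.differentiableWithinAt
    · intro s hs
      rw [interior_Ici] at hs
      have hs' : 0 < s := hs
      rw [(hd s).deriv]
      have := hNlow s hs'.le
      rw [intervalIntegral.integral_const_mul] at this
      have h2 : 0 ≤ s * ((∫ t in (-Real.pi)..Real.pi, G (s, t)) + Real.pi * K / 2 * (2 * s)) := by nlinarith
      exact nonneg_of_mul_nonneg_right h2 hs'
  have := mono (Set.mem_Ici.2 le_rfl) (Set.mem_Ici.2 hr) hr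
  simp only [hP, zero_mul, add_zero, integral_const, smul_eq_mul] at this
  have e : (∫ θ in (-Real.pi)..Real.pi, v (p.1 + r * Real.cos θ, p.2 + r * Real.sin θ)) ≥ 2 * Real.pi * v (p.1, p.2) - Real.pi * K / 2 * r^2 := by
    nlinarith
  linarith

theorem dt_box (v : ℝ × ℝ → ℝ) (hv : ContDiff ℝ (⊤ : ℕ∞) v) (K : ℝ) (hK : 0 ≤ K)
    (hlap : ∀ p, -K ≤ dtLap v p) (p : ℝ × ℝ) (b : ℝ) (hb : 0 < b) (C0 v0 : ℝ) (hC0 : ∀ q, v q ≤ C0) (hv0 : v0 ≤ v p)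
    (R : ℝ) (hR : R = 1 + |p.1| + b + |p.2|) :
    dtM b (fun q => C0 - v q) ≤ b⁻¹ * (R * (R * (2 * Real.pi * (C0 - v0) + Real.pi * K * R ^ 2 / 2))) := by
  have cv := hv.continuous
  have hpi := Real.pi_pos
  have hR0 : 0 < R := by rw [hR]; positivity
  set D := 2 * Real.pi * (C0 - v0) + Real.pi * K * R ^ 2 / 2 with hD
  have hD0 : 0 ≤ D := by
    have : v0 ≤ C0 := hv0.trans (hC0 p)
    have : 0 ≤ C0 - v0 := by linarith
    positivity
  set g : ℝ × ℝ → ℝ := fun q => C0 - v q with hg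
  have cg : Continuous g := by fun_prop
  have g0 : ∀ q, 0 ≤ g q := fun q => sub_nonneg.2 (hC0 q)
  -- box integral
  have step1 : dtM b g = b⁻¹ * ∫ z in Set.Icc (0:ℝ) 1 ×ˢ Set.Icc (0:ℝ) b, g z := by
    unfold dtM
    have := integral_comp_mul_right (a := 0) (b := 1) (fun y => ∫ s in (0:ℝ)..1, g (s, y)) hb.ne'
    rw [this]
    simp only [zero_mul, one_mul, smul_eq_mul]
    congr 1
    rw [← MeasureTheory.intervalIntegral_intervalIntegral_swap (F := fun s y => g (s, y))]
    · rw [MeasureTheory.Measure.volume_eq_prod, MeasureTheory.setIntegral_prod _ (by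
        rw [← MeasureTheory.Measure.volume_eq_prod]
        exact cg.continuousOn.integrableOn_compact (isCompact_Icc.prod isCompact_Icc))]
      rw [integral_of_le zero_le_one, ← MeasureTheory.integral_Icc_eq_integral_Ioc]
      congr 1; funext s
      rw [integral_of_le hb.le, ← MeasureTheory.integral_Icc_eq_integral_Ioc]
    · rw [Set.uIoc_of_le zero_le_one, Set.uIoc_of_le hb.le]
      exact (cg.continuousOn.integrableOn_compact (isCompact_Icc.prod isCompact_Icc)).mono_set (Set.prod_mono Set.Ioc_subset_Icc_self Set.Ioc_subset_Icc_self)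
  rw [step1]
  apply mul_le_mul_of_nonneg_left _ (inv_nonneg.2 hb.le)
  set B : Set (ℝ × ℝ) := {z | z.1 ^ 2 + z.2 ^ 2 ≤ R ^ 2} with hB
  have Bcl : IsClosed B := isClosed_le (by fun_prop) (by fun_prop)
  have Bcomp : IsCompact B := by
    refine (isCompact_Icc.prod isCompact_Icc : IsCompact (Set.Icc (-R) R ×ˢ Set.Icc (-R) R)).of_isClosed_subset Bcl ?_
    intro z hz
    have hz' : z.1 ^ 2 + z.2 ^ 2 ≤ R ^ 2 := hz
    exact ⟨abs_le.1 (abs_le_of_sq_le_sq (by nlinarith [sq_nonneg z.2]) hR0.le), abs_le.1 (abs_le_of_sq_le_sq (by nlinarith [sq_nonneg z.1]) hR0.le)⟩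
  have step2 : ∫ z in Set.Icc (0:ℝ) 1 ×ˢ Set.Icc (0:ℝ) b, g z ≤ ∫ z in B, g (p + z) := by
    have e : ∫ z in Set.Icc (0:ℝ) 1 ×ˢ Set.Icc (0:ℝ) b, g z = ∫ z, Set.indicator (Set.Icc (0:ℝ) 1 ×ˢ Set.Icc (0:ℝ) b) g (p + z) := by
      rw [MeasureTheory.integral_add_left_eq_self (fun z => Set.indicator (Set.Icc (0:ℝ) 1 ×ˢ Set.Icc (0:ℝ) b) g z) p,
        MeasureTheory.integral_indicator (measurableSet_Icc.prod measurableSet_Icc)]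
    rw [e, ← MeasureTheory.integral_indicator Bcl.measurableSet]
    apply MeasureTheory.integral_mono_of_nonneg
    · exact Filter.Eventually.of_forall fun z => Set.indicator_nonneg (fun q _ => g0 q) _
    · rw [MeasureTheory.integrable_indicator_iff Bcl.measurableSet]
      exact (by fun_prop : Continuous fun z => g (p + z)).continuousOn.integrableOn_compact Bcomp
    · refine Filter.Eventually.of_forall fun z => ?_
      by_cases hz : p + z ∈ Set.Icc (0:ℝ) 1 ×ˢ Set.Icc (0:ℝ) b
      · have hzB : z ∈ B := by
          have h1 : 0 ≤ p.1 + z.1 ∧ p.1 + z.1 ≤ 1 := hz.1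
          have h2 : 0 ≤ p.2 + z.2 ∧ p.2 + z.2 ≤ b := hz.2
          have a1 : |z.1| ≤ 1 + |p.1| := by
            rw [abs_le]; constructor <;> linarith [le_abs_self p.1, neg_abs_le p.1]
          have a2 : |z.2| ≤ b + |p.2| := by
            rw [abs_le]; constructor <;> linarith [le_abs_self p.2, neg_abs_le p.2]
          show z.1 ^ 2 + z.2 ^ 2 ≤ R ^ 2
          have b1 := sq_le_sq' (by linarith [abs_nonneg z.1, abs_nonneg p.1]) a1
          have b2 := sq_le_sq' (by linarith [abs_nonneg z.2, abs_nonneg p.2]) a2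
          rw [sq_abs] at b1 b2
          rw [hR]
          nlinarith [mul_nonneg (by positivity : 0 ≤ 1 + |p.1|) (by positivity : 0 ≤ b + |p.2|)]
        simp only [Set.indicator_of_mem hz, Set.indicator_of_mem hzB]
        exact le_rfl
      · simp only [Set.indicator_of_notMem hz]
        exact Set.indicator_nonneg (fun q _ => g0 _) _
  refine step2.trans ?_
  rw [← MeasureTheory.integral_indicator Bcl.measurableSet, ← integral_comp_polarCoord_symm]
  set Q : ℝ × ℝ → ℝ := fun z => z.1 * g (p.1 + z.1 * Real.cos z.2, p.2 + z.1 * Real.sin z.2) with hQ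
  have cQ : Continuous Q := by fun_prop
  have step3 : ∫ z in polarCoord.target, z.1 • Set.indicator B (fun z => g (p + z)) (polarCoord.symm z) = ∫ z in Set.Ioc (0:ℝ) R ×ˢ Set.Ioo (-Real.pi) Real.pi, Q z := by
    rw [← MeasureTheory.integral_indicator (measurableSet_Ioc.prod measurableSet_Ioo), ← MeasureTheory.integral_indicator polarCoord.open_target.measurableSet]
    congr 1; funext z
    rw [polarCoord_target]
    by_cases hz : z ∈ Set.Ioi (0:ℝ) ×ˢ Set.Ioo (-Real.pi) Real.pi
    · rw [Set.indicator_of_mem hz]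
      have hz1 : 0 < z.1 := hz.1
      have hs : polarCoord.symm z = (z.1 * Real.cos z.2, z.1 * Real.sin z.2) := polarCoord_symm_apply z
      have hn : (z.1 * Real.cos z.2)^2 + (z.1 * Real.sin z.2)^2 = z.1^2 := by
        have := Real.sin_sq_add_cos_sq z.2
        linear_combination z.1^2 * this
      by_cases hzR : z.1 ≤ R
      · have m1 : polarCoord.symm z ∈ B := by
          rw [hs]; show (z.1 * Real.cos z.2)^2 + (z.1 * Real.sin z.2)^2 ≤ R^2
          rw [hn]; nlinarith
        have m2 : z ∈ Set.Ioc (0:ℝ) R ×ˢ Set.Ioo (-Real.pi) Real.pi := ⟨⟨hz1, hzR⟩, hz.2⟩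
        rw [Set.indicator_of_mem m1, Set.indicator_of_mem m2, hs]
        rfl
      · have m1 : polarCoord.symm z ∉ B := by
          rw [hs]; show ¬ (z.1 * Real.cos z.2)^2 + (z.1 * Real.sin z.2)^2 ≤ R^2
          rw [hn]; push Not at hzR ⊢; nlinarith
        have m2 : z ∉ Set.Ioc (0:ℝ) R ×ˢ Set.Ioo (-Real.pi) Real.pi := fun h => hzR h.1.2
        rw [Set.indicator_of_notMem m1, Set.indicator_of_notMem m2]; simp
    · have m2 : z ∉ Set.Ioc (0:ℝ) R ×ˢ Set.Ioo (-Real.pi) Real.pi := fun h => hz ⟨h.1.1, h.2⟩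
      rw [Set.indicator_of_notMem hz, Set.indicator_of_notMem m2]
  rw [step3]
  have step4 : ∫ z in Set.Ioc (0:ℝ) R ×ˢ Set.Ioo (-Real.pi) Real.pi, Q z = ∫ r in (0:ℝ)..R, ∫ θ in (-Real.pi)..Real.pi, Q (r, θ) := by
    rw [MeasureTheory.Measure.volume_eq_prod, MeasureTheory.setIntegral_prod]
    · rw [integral_of_le hR0.le]
      congr 1; funext r
      rw [integral_of_le (by linarith), MeasureTheory.integral_Ioc_eq_integral_Ioo]
    · rw [← MeasureTheory.Measure.volume_eq_prod]
      exact (cQ.continuousOn.integrableOn_compact (isCompact_Icc.prod isCompact_Icc)).mono_set (Set.prod_mono Set.Ioc_subset_Icc_self Set.Ioo_subset_Icc_self)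
  rw [step4]
  have hin : ∀ r ∈ Set.Icc (0:ℝ) R, ∫ θ in (-Real.pi)..Real.pi, Q (r, θ) ≤ R * D := by
    intro r hr
    have hc := dt_circle v hv K hK hlap p r hr.1
    have e : ∫ θ in (-Real.pi)..Real.pi, Q (r, θ) = r * (2 * Real.pi * C0 - ∫ θ in (-Real.pi)..Real.pi, v (p.1 + r * Real.cos θ, p.2 + r * Real.sin θ)) := by
      simp only [hQ, hg]
      rw [intervalIntegral.integral_const_mul, integral_sub (by simp) ((by fun_prop : Continuous fun θ => v (p.1 + r * Real.cos θ, p.2 + r * Real.sin θ)).intervalIntegrable _ _)]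
      simp; ring_nf; simp
    rw [e]
    have h2 : r ^ 2 ≤ R ^ 2 := by nlinarith [hr.1, hr.2]
    have h3 : 2 * Real.pi * C0 - (∫ θ in (-Real.pi)..Real.pi, v (p.1 + r * Real.cos θ, p.2 + r * Real.sin θ)) ≤ D := by
      have h4 : Real.pi * K * r ^ 2 ≤ Real.pi * K * R ^ 2 := by gcongr
      have h5 : 2 * Real.pi * v0 ≤ 2 * Real.pi * v p := by gcongr
      rw [hD]; linarith
    exact (mul_le_mul_of_nonneg_left h3 hr.1).trans (mul_le_mul_of_nonneg_right hr.2 hD0)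
  have : ∫ r in (0:ℝ)..R, ∫ θ in (-Real.pi)..Real.pi, Q (r, θ) ≤ ∫ r in (0:ℝ)..R, R * D := by
    apply integral_mono_on hR0.le _ (by simp) hin
    exact (intervalIntegral.continuous_parametric_intervalIntegral_of_continuous' (f := fun s t => Q (s, t)) cQ _ _).intervalIntegrable _ _
  simpa using this


section abs
variable {E : Type*} [NormedAddCommGroup E] [InnerProductSpace ℝ E] {J : E →L[ℝ] E}

theorem dt_norm_form (hJ : ∀ x y, inner ℝ (J x) y = - inner ℝ x (J y)) (hJJ : ∀ x, J (J x) = - x)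
    {σ Φ : ℝ × ℝ → E} (hσ : ContDiff ℝ (⊤ : ℕ∞) σ) (h1 : ∀ p, ‖σ p‖ = 1)
    {v : ℝ × ℝ → ℝ} (hv : ContDiff ℝ (⊤ : ℕ∞) v) (hΦ : ∀ p, Φ p = Real.exp (v p) • σ p)
    (ho1 : ∀ p, inner ℝ (Φ p) (fderiv ℝ Φ p (1, 0) + J (fderiv ℝ Φ p (0, 1))) = 0)
    (ho2 : ∀ p, inner ℝ (J (Φ p)) (fderiv ℝ Φ p (1, 0) + J (fderiv ℝ Φ p (0, 1))) = 0) :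
    (∀ p, dtA J σ (1, 0) p = - fderiv ℝ v p (0, 1)) ∧ (∀ p, dtA J σ (0, 1) p = fderiv ℝ v p (1, 0)) ∧
    (∀ p, fderiv ℝ Φ p (1, 0) + J (fderiv ℝ Φ p (0, 1)) = Real.exp (v p) • (dtN J σ (1, 0) p + J (dtN J σ (0, 1) p))) ∧
    (∀ p, dtLap v p = 2 * inner ℝ (J (dtN J σ (1, 0) p)) (dtN J σ (0, 1) p)) := by
  have hΦ' : Φ = fun p => Real.exp (v p) • σ p := funext hΦ
  have hd : ∀ p w, fderiv ℝ Φ p w = Real.exp (v p) • (fderiv ℝ v p w • σ p + fderiv ℝ σ p w) := by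
    intro p w
    have h := ((hv.differentiable (by simp) p).hasFDerivAt.exp).smul (hσ.differentiable (by simp) p).hasFDerivAt
    have e : (fun p => Real.exp (v p) • σ p) = (fun x => Real.exp (v x)) • σ := rfl
    rw [hΦ', e, h.fderiv]
    simp
    module
  have hxJ : ∀ x, inner ℝ x (J x) = 0 := by
    intro x
    have := hJ x x
    rw [real_inner_comm] at this
    linarith
  have hxJ' : ∀ x, inner ℝ (J x) x = 0 := fun x => by rw [real_inner_comm]; exact hxJ x
  have hJn : ∀ x y, inner ℝ (J x) (J y) = inner ℝ x y := by
    intro x y; rw [hJ, hJJ]; simp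
  have n1 : ∀ p, inner ℝ (σ p) (σ p) = 1 := by intro p; rw [real_inner_self_eq_norm_sq, h1]; norm_num
  have hy : ∀ p, dtA J σ (0, 1) p = fderiv ℝ v p (1, 0) := by
    intro p
    have h := ho1 p
    rw [hd, hd, hΦ, map_smul, ← smul_add, inner_smul_left, inner_smul_right] at h
    have h' := (mul_eq_zero.1 ((mul_eq_zero.1 h).resolve_left (by simp))).resolve_left (Real.exp_pos _).ne'
    simp only [map_add, map_smul, inner_add_right, inner_smul_right, n1, hxJ, dt_perp hσ h1] at h'
    have := hJ (σ p) (fderiv ℝ σ p (0, 1))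
    unfold dtA
    linarith
  have hx : ∀ p, dtA J σ (1, 0) p = - fderiv ℝ v p (0, 1) := by
    intro p
    have h := ho2 p
    rw [hd, hd, hΦ, map_smul, map_smul, ← smul_add, inner_smul_left, inner_smul_right] at h
    have h' := (mul_eq_zero.1 ((mul_eq_zero.1 h).resolve_left (by simp))).resolve_left (Real.exp_pos _).ne'
    simp only [map_add, map_smul, inner_add_right, inner_smul_right, n1, hxJ', hJn, dt_perp hσ h1] at h'
    unfold dtA
    linarith
  refine ⟨hx, hy, ?_, ?_⟩
  · intro p
    rw [hd, hd]
    unfold dtN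
    rw [hx, hy]
    simp only [map_smul, map_add, map_sub, hJJ]
    module
  · intro p
    rw [← dt_curv hJ hJJ hσ h1]
    have e1 : dtA J σ (0, 1) = fun p => fderiv ℝ v p (1, 0) := funext hy
    have e2 : dtA J σ (1, 0) = fun p => - fderiv ℝ v p (0, 1) := funext hx
    rw [e1, e2, fderiv_fun_neg]
    simp [dtLap]
end abs

/-- the concrete target -/
abbrev DtE := PiLp 2 (fun _ : Fin 4 => ℂ)

/-- multiplication by i -/
noncomputable def dtJ : DtE →L[ℝ] DtE := (Complex.I • ContinuousLinearMap.id ℂ DtE).restrictScalars ℝ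

theorem dtJ_apply (x : DtE) (i : Fin 4) : (dtJ x) i = Complex.I * x i := by
  simp [dtJ]

theorem dt_inner (x y : DtE) : inner ℝ x y = ∑ i, ((starRingEnd ℂ) (x i) * y i).re := by
  rw [PiLp.inner_apply]
  congr 1; funext i
  rw [Complex.inner, mul_comm]

theorem dtJ_skew (x y : DtE) : inner ℝ (dtJ x) y = - inner ℝ x (dtJ y) := by
  rw [dt_inner, dt_inner, ← Finset.sum_neg_distrib]
  congr 1; funext i
  simp [dtJ_apply]; ring

theorem dtJ_sq (x : DtE) : dtJ (dtJ x) = - x := by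
  ext i
  rw [dtJ_apply, dtJ_apply, ← mul_assoc]; simp

theorem dt_fderiv_comp_i (Φ : ℝ × ℝ → DtE) (hΦ : ContDiff ℝ (⊤ : ℕ∞) Φ) (p w : ℝ × ℝ) (i : Fin 4) :
    (fderiv ℝ Φ p w) i = fderiv ℝ (fun q => Φ q i) p w := by
  have h := ((PiLp.proj 2 (fun _ : Fin 4 => ℂ) (𝕜 := ℝ) i).hasFDerivAt.comp p (hΦ.differentiable (by simp) p).hasFDerivAt).fderiv
  have e : (⇑(PiLp.proj 2 (fun _ : Fin 4 => ℂ) (𝕜 := ℝ) i) ∘ Φ) = fun q => Φ q i := rfl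
  rw [e] at h
  rw [h]; rfl

theorem dt_Phi_contDiff (f : Fin 4 → ℝ × ℝ → ℂ) (hf : ∀ i, ContDiff ℝ (⊤ : ℕ∞) (f i)) :
    ContDiff ℝ (⊤ : ℕ∞) (fun p => (WithLp.toLp 2 (fun i => f i p) : DtE)) := by
  rw [contDiff_piLp]
  exact hf


theorem dt_expderiv (c : ℂ) (d : ℂ) (p w : ℝ × ℝ) :
    fderiv ℝ (fun q : ℝ × ℝ => d * Complex.exp (c * (q.2 : ℂ))) p w = (w.2 : ℂ) * c * (d * Complex.exp (c * (p.2 : ℂ))) := by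
  have h0 : HasFDerivAt (fun q : ℝ × ℝ => (q.2 : ℂ)) (Complex.ofRealCLM.comp (ContinuousLinearMap.snd ℝ ℝ ℝ)) p :=
    (Complex.ofRealCLM.comp (ContinuousLinearMap.snd ℝ ℝ ℝ)).hasFDerivAt
  have h := (((h0.const_mul c).cexp).const_mul d).fderiv
  rw [h]
  simp
  ring

theorem dt_conjderiv (f : ℝ × ℝ → ℂ) (hf : ContDiff ℝ (⊤ : ℕ∞) f) (p w : ℝ × ℝ) :
    fderiv ℝ (fun q => (starRingEnd ℂ) (f q)) p w = (starRingEnd ℂ) (fderiv ℝ f p w) := by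
  have h := (Complex.conjCLE.toContinuousLinearMap.hasFDerivAt.comp p (hf.differentiable (by simp) p).hasFDerivAt).fderiv
  have e : (⇑(Complex.conjCLE.toContinuousLinearMap) ∘ f) = fun q => (starRingEnd ℂ) (f q) := rfl
  rw [e] at h
  rw [h]; rfl

/-- the four component functions -/
noncomputable def dtF (f1 f2 : ℝ × ℝ → ℂ) (δ μ : ℝ) : Fin 4 → ℝ × ℝ → ℂ :=
  ![f1, fun q => (starRingEnd ℂ) (f2 q), fun q => (δ:ℂ) * Complex.exp ((Complex.I * μ) * (q.2 : ℂ)),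
    fun q => (δ:ℂ) * Complex.exp ((- Complex.I * μ) * (q.2 : ℂ))]

theorem dtF_smooth {f1 f2 : ℝ × ℝ → ℂ} (h1 : ContDiff ℝ (⊤ : ℕ∞) f1) (h2 : ContDiff ℝ (⊤ : ℕ∞) f2) (δ μ : ℝ) (i : Fin 4) :
    ContDiff ℝ (⊤ : ℕ∞) (dtF f1 f2 δ μ i) := by
  have h0 : ContDiff ℝ (⊤ : ℕ∞) (fun q : ℝ × ℝ => (q.2 : ℂ)) := Complex.ofRealCLM.contDiff.comp contDiff_snd
  fin_cases i
  · exact h1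
  · exact Complex.conjCLE.toContinuousLinearMap.contDiff.comp h2
  · exact contDiff_const.mul ((contDiff_const.mul h0).cexp)
  · exact contDiff_const.mul ((contDiff_const.mul h0).cexp)

theorem dt_expconj (μ y : ℝ) : (starRingEnd ℂ) (Complex.exp ((Complex.I * μ) * (y : ℂ))) * Complex.exp ((Complex.I * μ) * (y : ℂ)) = 1 := by
  rw [← Complex.exp_conj, ← Complex.exp_add]
  simp

theorem dt_expconj2 (μ y : ℝ) : (starRingEnd ℂ) (Complex.exp ((-Complex.I * μ) * (y : ℂ))) * Complex.exp ((-Complex.I * μ) * (y : ℂ)) = 1 := by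
  rw [← Complex.exp_conj, ← Complex.exp_add]
  simp

theorem dt_nsq (δ : ℝ) (e : ℂ) (h : (starRingEnd ℂ) e * e = 1) : e.re ^ 2 + e.im ^ 2 = 1 := by
  have := congrArg Complex.re h
  simp at this
  nlinarith

theorem dt_concrete (a b : ℝ) (ha : |a| ≤ 1/2) (hb : 0 < b) {f1 f2 : ℝ × ℝ → ℂ} (h1 : ContDiff ℝ (⊤ : ℕ∞) f1) (h2 : ContDiff ℝ (⊤ : ℕ∞) f2)
    (V : ℝ × ℝ → ℝ)
    (e1 : ∀ p, fderiv ℝ f1 p (1, 0) + Complex.I * fderiv ℝ f1 p (0, 1) = - ((V p : ℂ) * f2 p))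
    (e2 : ∀ p, fderiv ℝ f2 p (1, 0) - Complex.I * fderiv ℝ f2 p (0, 1) = (V p : ℂ) * f1 p)
    (p1 : ∀ p, f1 (p + (1, 0)) = f1 p) (p2 : ∀ p, f2 (p + (1, 0)) = f2 p)
    (q1 : ∀ p, f1 (p + (a, b)) = - f1 p) (q2 : ∀ p, f2 (p + (a, b)) = - f2 p)
    (u : ℝ × ℝ → ℝ) (hu : u = fun p => Complex.normSq (f1 p) + Complex.normSq (f2 p))
    (μ δ : ℝ) (hμ : μ = Real.pi / b) (hδ : 0 < δ) :
    ∃ X Y : ℝ × ℝ → DtE, Continuous X ∧ Continuous Y ∧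
    ContDiff ℝ (⊤ : ℕ∞) (fun p => 1/2 * Real.log (u p + 2 * δ ^ 2)) ∧
    (∀ p, ‖X p + dtJ (Y p)‖ ^ 2 * (u p + 2 * δ ^ 2) = V p ^ 2 * u p + μ ^ 2 * (2 * δ ^ 2)) ∧
    (∀ p, dtLap (fun p => 1/2 * Real.log (u p + 2 * δ ^ 2)) p = 2 * inner ℝ (dtJ (X p)) (Y p)) ∧
    (dtM b (fun p => inner ℝ (dtJ (X p)) (Y p)) = 0) ∧
    (Real.pi ≤ |a| * dtM b (fun p => ‖X p‖) + b * dtM b (fun p => ‖Y p‖) +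
      |a| * dtM b (fun p => ‖X p‖ ^ 2) + b * dtM b (fun p => ‖X p‖ * ‖Y p‖)) ∧
    (Real.pi ^ 2 ≤ b ^ 2 * dtM b (fun p => ‖Y p‖ ^ 2) + 29/16 * dtM b (fun p => ‖X p‖ ^ 2)) := by
  set F := dtF f1 f2 δ μ with hF
  set Φ : ℝ × ℝ → DtE := fun p => WithLp.toLp 2 (fun i => F i p) with hΦdef
  have hΦs : ContDiff ℝ (⊤ : ℕ∞) Φ := dt_Phi_contDiff F (dtF_smooth h1 h2 δ μ)
  have hΦi : ∀ p i, Φ p i = F i p := fun p i => rfl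
  have hus : ContDiff ℝ (⊤ : ℕ∞) u := by
    have : u = fun p => ‖f1 p‖ ^ 2 + ‖f2 p‖ ^ 2 := by
      rw [hu]; funext p; rw [Complex.normSq_eq_norm_sq, Complex.normSq_eq_norm_sq]
    rw [this]
    exact (h1.norm_sq ℝ).add (h2.norm_sq ℝ)
  have hu0 : ∀ p, 0 ≤ u p := fun p => by
    rw [hu]; exact add_nonneg (Complex.normSq_nonneg _) (Complex.normSq_nonneg _)
  have hw0 : ∀ p, 0 < u p + 2 * δ ^ 2 := fun p => by have := hu0 p; positivity
  set v : ℝ × ℝ → ℝ := fun p => 1/2 * Real.log (u p + 2 * δ ^ 2) with hvdef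
  have hvs : ContDiff ℝ (⊤ : ℕ∞) v := contDiff_const.mul ((hus.add contDiff_const).log (fun p => (hw0 p).ne'))
  have hev : ∀ p, Real.exp (v p) ^ 2 = u p + 2 * δ ^ 2 := by
    intro p
    rw [← Real.exp_nat_mul, hvdef]
    simp only [Nat.cast_ofNat]
    rw [show 2 * (1/2 * Real.log (u p + 2 * δ ^ 2)) = Real.log (u p + 2 * δ ^ 2) by ring, Real.exp_log (hw0 p)]
  have hnn : ∀ x : DtE, ‖x‖ ^ 2 = ∑ i, Complex.normSq (x i) := by
    intro x
    rw [← real_inner_self_eq_norm_sq, dt_inner]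
    congr 1; funext i
    rw [← Complex.normSq_eq_conj_mul_self]; simp
  have hE1 : ∀ p : ℝ × ℝ, Complex.normSq (Complex.exp ((Complex.I * μ) * (p.2 : ℂ))) = 1 := by
    intro p
    have := dt_expconj μ p.2
    rw [← Complex.normSq_eq_conj_mul_self] at this
    exact_mod_cast this
  have hE2 : ∀ p : ℝ × ℝ, Complex.normSq (Complex.exp ((-Complex.I * μ) * (p.2 : ℂ))) = 1 := by
    intro p
    have := dt_expconj2 μ p.2
    rw [← Complex.normSq_eq_conj_mul_self] at this
    exact_mod_cast this
  have hΦn : ∀ p, ‖Φ p‖ ^ 2 = u p + 2 * δ ^ 2 := by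
    intro p
    rw [hnn, Fin.sum_univ_four]
    simp only [hΦi, hF, dtF, Matrix.cons_val, Complex.normSq_mul, hE1, hE2, Complex.normSq_conj, Complex.normSq_ofReal, hu]
    ring
  set G : ℝ × ℝ → DtE := fun p => fderiv ℝ Φ p (1, 0) + dtJ (fderiv ℝ Φ p (0, 1)) with hG
  have hGi : ∀ p i, G p i = fderiv ℝ (F i) p (1, 0) + Complex.I * fderiv ℝ (F i) p (0, 1) := by
    intro p i
    simp only [hG, PiLp.add_apply, dtJ_apply, dt_fderiv_comp_i Φ hΦs, hΦi]
  have hG0 : ∀ p, G p 0 = - ((V p : ℂ) * f2 p) := by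
    intro p; rw [hGi]; exact e1 p
  have hG1 : ∀ p, G p 1 = (V p : ℂ) * (starRingEnd ℂ) (f1 p) := by
    intro p; rw [hGi]
    have : F 1 = fun q => (starRingEnd ℂ) (f2 q) := rfl
    rw [this, dt_conjderiv f2 h2, dt_conjderiv f2 h2]
    have := congrArg (starRingEnd ℂ) (e2 p)
    simpa using this
  have hG2 : ∀ p, G p 2 = - ((μ:ℂ) * F 2 p) := by
    intro p; rw [hGi]
    have : F 2 = fun q => (δ:ℂ) * Complex.exp ((Complex.I * μ) * (q.2 : ℂ)) := rfl
    rw [this, dt_expderiv, dt_expderiv]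
    simp
    linear_combination (μ * δ * Complex.exp ((Complex.I * μ) * (p.2 : ℂ))) * Complex.I_mul_I
  have hG3 : ∀ p, G p 3 = (μ:ℂ) * F 3 p := by
    intro p; rw [hGi]
    have : F 3 = fun q => (δ:ℂ) * Complex.exp ((-Complex.I * μ) * (q.2 : ℂ)) := rfl
    rw [this, dt_expderiv, dt_expderiv]
    simp
    linear_combination (-μ * δ * Complex.exp (-(Complex.I * μ * (p.2 : ℂ)))) * Complex.I_mul_I
  have hF0 : ∀ p, F 0 p = f1 p := fun p => rfl
  have hF1 : ∀ p, F 1 p = (starRingEnd ℂ) (f2 p) := fun p => rfl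
  have hF2 : ∀ p, Complex.normSq (F 2 p) = δ ^ 2 := fun p => by
    have : F 2 p = (δ:ℂ) * Complex.exp ((Complex.I * μ) * (p.2 : ℂ)) := rfl
    rw [this, Complex.normSq_mul, hE1, Complex.normSq_ofReal]; ring
  have hF3 : ∀ p, Complex.normSq (F 3 p) = δ ^ 2 := fun p => by
    have : F 3 p = (δ:ℂ) * Complex.exp ((-Complex.I * μ) * (p.2 : ℂ)) := rfl
    rw [this, Complex.normSq_mul, hE2, Complex.normSq_ofReal]; ring
  have hGn : ∀ p, ‖G p‖ ^ 2 = V p ^ 2 * u p + μ ^ 2 * (2 * δ ^ 2) := by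
    intro p
    rw [hnn, Fin.sum_univ_four, hG0, hG1, hG2, hG3]
    simp only [Complex.normSq_neg, Complex.normSq_mul, hF2, hF3, Complex.normSq_conj, Complex.normSq_ofReal, hu]
    ring
  have ho1 : ∀ p, inner ℝ (Φ p) (G p) = 0 := by
    intro p
    rw [dt_inner, Fin.sum_univ_four, hG0, hG1, hG2, hG3]
    have n2 := hF2 p
    have n3 := hF3 p
    rw [Complex.normSq_apply] at n2 n3
    simp [hΦi, hF0, hF1]
    linear_combination μ * n3 - μ * n2
  have ho2 : ∀ p, inner ℝ (dtJ (Φ p)) (G p) = 0 := by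
    intro p
    rw [dt_inner, Fin.sum_univ_four, dtJ_apply, dtJ_apply, dtJ_apply, dtJ_apply, hG0, hG1, hG2, hG3]
    simp [hΦi, hF0, hF1]
    ring
  set σ : ℝ × ℝ → DtE := fun p => Real.exp (- v p) • Φ p with hσdef
  have hσs : ContDiff ℝ (⊤ : ℕ∞) σ := (hvs.neg.exp).smul hΦs
  have hΦσ : ∀ p, Φ p = Real.exp (v p) • σ p := by
    intro p; rw [hσdef]; simp only [smul_smul, ← Real.exp_add]; simp
  have hΦnn : ∀ p, ‖Φ p‖ = Real.exp (v p) := by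
    intro p
    have := hΦn p
    rw [← hev] at this
    exact (pow_left_inj₀ (norm_nonneg _) (Real.exp_pos _).le two_ne_zero).1 this
  have hσ1 : ∀ p, ‖σ p‖ = 1 := by
    intro p
    rw [hσdef]; simp only [norm_smul, hΦnn, Real.norm_eq_abs, Real.abs_exp, ← Real.exp_add]; simp
  have hΦp : ∀ p, Φ (p + (1, 0)) = Φ p := by
    intro p
    ext i
    rw [hΦi, hΦi]
    fin_cases i <;> simp [hF, dtF, p1, p2]
  have hμb : (μ : ℂ) * b = Real.pi := by
    have : (b : ℂ) ≠ 0 := by exact_mod_cast hb.ne'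
    rw [hμ]; push_cast; field_simp
  have hΦq : ∀ p, Φ (p + (a, b)) = - Φ p := by
    intro p
    ext i
    rw [PiLp.neg_apply, hΦi, hΦi]
    fin_cases i
    · simp [hF, dtF, q1]
    · simp [hF, dtF, q2]
    · simp [hF, dtF]
      rw [show Complex.I * μ * (p.2 + b) = Complex.I * μ * p.2 + Real.pi * Complex.I by linear_combination Complex.I * hμb, Complex.exp_add, Complex.exp_pi_mul_I]
      ring
    · simp [hF, dtF]
      rw [show -(Complex.I * μ * (p.2 + b)) = -(Complex.I * μ * p.2) + -(Real.pi * Complex.I) by linear_combination -Complex.I * hμb, Complex.exp_add, Complex.exp_neg (Real.pi * Complex.I), Complex.exp_pi_mul_I]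
      norm_num
  have hup : ∀ p, u (p + (1, 0)) = u p := by intro p; simp only [hu, p1, p2]
  have huq : ∀ p, u (p + (a, b)) = u p := by intro p; simp only [hu, q1, q2, Complex.normSq_neg]
  have hvp : ∀ p, v (p + (1, 0)) = v p := by intro p; simp only [hvdef, hup]
  have hvq : ∀ p, v (p + (a, b)) = v p := by intro p; simp only [hvdef, huq]
  have hσp : ∀ p, σ (p + (1, 0)) = σ p := by intro p; simp only [hσdef, hvp, hΦp]
  have hσq : ∀ p, σ (p + (a, b)) = - σ p := by intro p; simp only [hσdef, hvq, hΦq, smul_neg]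
  obtain ⟨hAx, hAy, hN, hL⟩ := dt_norm_form dtJ_skew dtJ_sq hσs hσ1 hvs hΦσ ho1 ho2
  obtain ⟨t1, t2, t3⟩ := dt_torus dtJ_skew dtJ_sq hσs hσ1 a b ha hb hσp hσq hvs hvp hvq hAx hAy
  refine ⟨dtN dtJ σ (1, 0), dtN dtJ σ (0, 1), (dtN_contDiff hσs _).continuous, (dtN_contDiff hσs _).continuous, hvs, ?_, hL, t1, t2, t3⟩
  intro p
  rw [← hGn, hG]
  simp only
  rw [hN, norm_smul, mul_pow, ← hev]
  simp [mul_comm]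


theorem dt_reduce {α : Type*} (f : ℝ × ℝ → α) (a b : ℝ) (hb : 0 < b) (p1 : ∀ p, f (p + (1, 0)) = f p)
    (p2 : ∀ p, f (p + (a, b)) = f p) (p : ℝ × ℝ) :
    ∃ s ∈ Set.Icc (0:ℝ) 1, ∃ t ∈ Set.Icc (0:ℝ) 1, f p = f (s, t * b) := by
  have P1 : Function.Periodic f ((1, 0) : ℝ × ℝ) := p1
  have P2 : Function.Periodic f ((a, b) : ℝ × ℝ) := p2
  set n : ℤ := ⌊p.2 / b⌋ with hn
  set r : ℝ := p.1 - n * a with hr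
  set m : ℤ := ⌊r⌋ with hm
  refine ⟨Int.fract r, ⟨Int.fract_nonneg _, (Int.fract_lt_one _).le⟩, Int.fract (p.2 / b), ⟨Int.fract_nonneg _, (Int.fract_lt_one _).le⟩, ?_⟩
  have h1 := P2.sub_zsmul_eq n (x := p)
  have h2 := P1.sub_zsmul_eq m (x := p - n • ((a, b) : ℝ × ℝ))
  rw [← h1, ← h2]
  congr 1
  have hd : p.2 / b * b = p.2 := div_mul_cancel₀ _ hb.ne'
  have hf1 : Int.fract r = p.1 - n * a - m := by rw [← Int.self_sub_floor]
  have hf2 : Int.fract (p.2 / b) * b = p.2 - n * b := by rw [← Int.self_sub_floor, sub_mul, hd]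
  rw [hf1, hf2]
  ext <;> simp

set_option maxHeartbeats 2000000 in
theorem dt_theta (b : ℝ) (hb : 0 < b) (u : ℝ × ℝ → ℝ) (cu : Continuous u) (hu0 : ∀ p, 0 ≤ u p) (U : ℝ) (hU : ∀ p, u p ≤ U)
    (p0 : ℝ × ℝ) (hp0 : 0 < u p0) (K : ℝ) (hK : 0 ≤ K)
    (hs : ∀ δ, 0 < δ → ContDiff ℝ (⊤ : ℕ∞) (fun p => 1/2 * Real.log (u p + 2 * δ ^ 2)))
    (hl : ∀ δ, 0 < δ → ∀ p, -K ≤ dtLap (fun p => 1/2 * Real.log (u p + 2 * δ ^ 2)) p) (κ : ℝ) (hκ : 0 < κ) :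
    ∃ δ, 0 < δ ∧ dtM b (fun p => 2 * δ ^ 2 / (u p + 2 * δ ^ 2)) ≤ κ := by
  have hU0 : 0 ≤ U := (hu0 p0).trans (hU p0)
  set C0 := (U + 2) / 2 with hC0
  have hC00 : 0 < C0 := by positivity
  set R := 1 + |p0.1| + b + |p0.2| with hR
  set D := b⁻¹ * (R * (R * (2 * Real.pi * (C0 - 1/2 * Real.log (u p0)) + Real.pi * K * R ^ 2 / 2))) with hD
  have hvC : ∀ δ, 0 < δ → δ ≤ 1 → ∀ p, 1/2 * Real.log (u p + 2 * δ ^ 2) ≤ C0 := by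
    intro δ hδ hδ1 p
    have h0 := hu0 p
    have h := Real.log_le_sub_one_of_pos (by positivity : 0 < u p + 2 * δ ^ 2)
    have := hU p
    have : δ ^ 2 ≤ 1 := by nlinarith
    rw [hC0]; linarith
  have hDM : ∀ δ, 0 < δ → δ ≤ 1 → dtM b (fun q => C0 - 1/2 * Real.log (u q + 2 * δ ^ 2)) ≤ D := by
    intro δ hδ hδ1
    refine dt_box _ (hs δ hδ) K hK (hl δ hδ) p0 b hb C0 _ (hvC δ hδ hδ1) ?_ R hR
    have := Real.log_le_log hp0 (by have := sq_nonneg δ; linarith : u p0 ≤ u p0 + 2 * δ ^ 2)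
    linarith
  have hcont : ∀ δ, 0 < δ → Continuous (fun p => 1/2 * Real.log (u p + 2 * δ ^ 2)) := fun δ hδ => (hs δ hδ).continuous
  have hD0 : 0 ≤ D := by
    refine le_trans ?_ (hDM 1 one_pos le_rfl)
    have cc := hcont 1 one_pos
    have := dtM_mono (b := b) (f := fun _ => 0) (g := fun q => C0 - 1/2 * Real.log (u q + 2 * (1:ℝ) ^ 2)) continuous_const (by fun_prop) (fun p => sub_nonneg.2 (hvC 1 one_pos le_rfl p))
    rwa [dtM_const] at this
  set N := (1 + 2 * D) / κ with hN
  have hN0 : 0 < N := by positivity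
  set δ := Real.exp (-N) / 3 with hδ
  have hδ0 : 0 < δ := by positivity
  have hδN : 3 * δ = Real.exp (-N) := by rw [hδ]; ring
  have hδ1 : δ ≤ 1 := by
    have : Real.exp (-N) ≤ 1 := Real.exp_le_one_iff.2 (by linarith)
    linarith
  have hδ2 : 2 * δ ≤ 1 / N := by
    have h := Real.add_one_le_exp N
    have : Real.exp (-N) ≤ 1 / N := by
      rw [Real.exp_neg, ← one_div]
      exact one_div_le_one_div_of_le hN0 (by linarith)
    linarith
  refine ⟨δ, hδ0, ?_⟩
  set Λ := C0 + N / 2 with hΛ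
  have hΛ0 : 0 < Λ := by positivity
  have cc := hcont δ hδ0
  have hw : ∀ p, 0 < u p + 2 * δ ^ 2 := fun p => by have := hu0 p; positivity
  have key : ∀ p, 2 * δ ^ 2 / (u p + 2 * δ ^ 2) ≤ 2 * δ + Λ⁻¹ * (C0 - 1/2 * Real.log (u p + 2 * δ ^ 2)) := by
    intro p
    rcases le_or_gt δ (u p) with h | h
    · have h1 : 2 * δ ^ 2 / (u p + 2 * δ ^ 2) ≤ 2 * δ := by
        rw [div_le_iff₀ (hw p)]
        have : 0 ≤ δ * (u p - δ) := mul_nonneg hδ0.le (by linarith)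
        have : 0 ≤ δ ^ 3 := by positivity
        nlinarith
      have h2 := sub_nonneg.2 (hvC δ hδ0 hδ1 p)
      have := mul_nonneg (inv_nonneg.2 hΛ0.le) h2
      linarith
    · have h1 : 2 * δ ^ 2 / (u p + 2 * δ ^ 2) ≤ 1 := by
        rw [div_le_one (hw p)]; have := hu0 p; linarith
      have h2 : Real.log (u p + 2 * δ ^ 2) ≤ - N := by
        rw [Real.log_le_iff_le_exp (hw p), ← hδN]
        nlinarith
      have h3 : 1 ≤ Λ⁻¹ * (C0 - 1/2 * Real.log (u p + 2 * δ ^ 2)) := by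
        rw [le_inv_mul_iff₀ hΛ0, hΛ]; linarith
      linarith
  have ct : Continuous (fun p => 2 * δ ^ 2 / (u p + 2 * δ ^ 2)) := Continuous.div (by fun_prop) (by fun_prop) (fun p => (hw p).ne')
  have h1 := dtM_mono (b := b) ct (by fun_prop) key
  rw [dtM_add (by fun_prop) (by fun_prop), dtM_const, dtM_const_mul] at h1
  have h2 := mul_le_mul_of_nonneg_left (hDM δ hδ0 hδ1) (inv_nonneg.2 hΛ0.le)
  have h3 : Λ⁻¹ * D ≤ 2 * D / N := by
    rw [inv_mul_eq_div, div_le_div_iff₀ hΛ0 hN0, hΛ]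
    nlinarith [mul_nonneg hD0 hC00.le]
  have h4 : 1 / N + 2 * D / N = κ := by
    rw [← add_div, hN]; field_simp
  linarith

set_option maxHeartbeats 4000000 in
theorem dt_est (a b μ : ℝ) (ha : |a| ≤ 1/2) (hb : b > Real.pi / 2) (hμ : μ = Real.pi / b)
    {X Y : ℝ × ℝ → DtE} (cX : Continuous X) (cY : Continuous Y) {V θ : ℝ × ℝ → ℝ} (cV : Continuous V) (cθ : Continuous θ)
    (hV : ∀ p, 0 ≤ V p) (hθ : ∀ p, 0 ≤ θ p)
    (hq : ∀ p, ‖X p + dtJ (Y p)‖ ^ 2 ≤ V p ^ 2 + μ ^ 2 * θ p)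
    (hMV : dtM b (fun p => V p ^ 2) = μ ^ 2) (κ : ℝ) (hκ : 0 < κ) (hκ1 : κ ≤ 1) (hm : dtM b θ ≤ κ ^ 2)
    (t1 : dtM b (fun p => inner ℝ (dtJ (X p)) (Y p)) = 0)
    (t2 : Real.pi ≤ |a| * dtM b (fun p => ‖X p‖) + b * dtM b (fun p => ‖Y p‖) +
      |a| * dtM b (fun p => ‖X p‖ ^ 2) + b * dtM b (fun p => ‖X p‖ * ‖Y p‖))
    (t3 : Real.pi ^ 2 ≤ b ^ 2 * dtM b (fun p => ‖Y p‖ ^ 2) + 29/16 * dtM b (fun p => ‖X p‖ ^ 2)) :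
    Real.pi ≤ b * dtM b V + (1/2 + 4 * μ ^ 2 + b * (1 + 2 * μ + 10 * μ ^ 2)) * κ := by
  have hpi := Real.pi_gt_d2
  have hb0 : 0 < b := by linarith
  have hμ0 : 0 < μ := by rw [hμ]; exact div_pos (by linarith) hb0
  have hbμ : Real.pi = b * μ := by rw [hμ]; field_simp
  set x2 := dtM b (fun p => ‖X p‖ ^ 2) with hx2
  set y2 := dtM b (fun p => ‖Y p‖ ^ 2) with hy2
  have nJ : ∀ x, ‖dtJ x‖ = ‖x‖ := fun x => dt_normJ dtJ_skew dtJ_sq x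
  have hx0 : 0 ≤ x2 := by
    have := dtM_mono (b := b) (f := fun _ => 0) (g := fun p => ‖X p‖^2) continuous_const (by fun_prop) (fun p => by positivity)
    rwa [dtM_const] at this
  have sum : x2 + y2 ≤ μ ^ 2 * (1 + κ ^ 2) := by
    have h : ∀ p, ‖X p‖ ^ 2 + ‖Y p‖ ^ 2 ≤ (V p ^ 2 + μ ^ 2 * θ p) + 2 * inner ℝ (dtJ (X p)) (Y p) := by
      intro p
      have := hq p
      rw [norm_add_sq_real, nJ] at this
      have h2 := dtJ_skew (X p) (Y p)
      linarith
    have h' := dtM_mono (b := b) (by fun_prop) (by fun_prop) h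
    rw [dtM_add (by fun_prop) (by fun_prop), dtM_add (by fun_prop) (by fun_prop), dtM_add (by fun_prop) (by fun_prop), dtM_const_mul, dtM_const_mul, t1, hMV] at h'
    have := mul_le_mul_of_nonneg_left hm (sq_nonneg μ)
    linarith
  have hx : x2 ≤ 4 * μ ^ 2 * κ ^ 2 := by
    have hb2 : 29/16 ≤ 3/4 * b ^ 2 := by nlinarith
    have : b ^ 2 * μ ^ 2 ≤ b ^ 2 * (y2 + 3/4 * x2) := by
      rw [hbμ] at t3
      nlinarith
    have := le_of_mul_le_mul_left this (by positivity)
    linarith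
  have hκ2 : κ ^ 2 ≤ κ := by nlinarith
  have hμ2 : 0 ≤ μ ^ 2 := sq_nonneg μ
  have hy : y2 ≤ 2 * μ ^ 2 := by nlinarith
  have hxk : κ⁻¹ * x2 ≤ 4 * μ ^ 2 * κ := by
    rw [inv_mul_le_iff₀ hκ]; linarith
  have hmk : κ⁻¹ * dtM b θ ≤ κ := by
    rw [inv_mul_le_iff₀ hκ]; linarith
  have MX : dtM b (fun p => ‖X p‖) ≤ κ + 4 * μ ^ 2 * κ := by
    have h : ∀ p, ‖X p‖ ≤ κ + κ⁻¹ * ‖X p‖ ^ 2 := by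
      intro p
      have : κ * ‖X p‖ ≤ κ * (κ + κ⁻¹ * ‖X p‖ ^ 2) := by
        rw [mul_add, mul_inv_cancel_left₀ hκ.ne']
        nlinarith [sq_nonneg (κ - ‖X p‖), sq_nonneg (κ + ‖X p‖)]
      exact le_of_mul_le_mul_left this hκ
    have h' := dtM_mono (b := b) (by fun_prop) (by fun_prop) h
    rw [dtM_add (by fun_prop) (by fun_prop), dtM_const, dtM_const_mul] at h'
    linarith
  have MXY : dtM b (fun p => ‖X p‖ * ‖Y p‖) ≤ 6 * μ ^ 2 * κ := by
    have h : ∀ p, ‖X p‖ * ‖Y p‖ ≤ κ * ‖Y p‖ ^ 2 + κ⁻¹ * ‖X p‖ ^ 2 := by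
      intro p
      have : κ * (‖X p‖ * ‖Y p‖) ≤ κ * (κ * ‖Y p‖ ^ 2 + κ⁻¹ * ‖X p‖ ^ 2) := by
        rw [mul_add, mul_inv_cancel_left₀ hκ.ne']
        nlinarith [sq_nonneg (κ * ‖Y p‖ - ‖X p‖), sq_nonneg (κ * ‖Y p‖ + ‖X p‖)]
      exact le_of_mul_le_mul_left this hκ
    have h' := dtM_mono (b := b) (by fun_prop) (by fun_prop) h
    rw [dtM_add (by fun_prop) (by fun_prop), dtM_const_mul, dtM_const_mul] at h'
    nlinarith
  have MY : dtM b (fun p => ‖Y p‖) ≤ dtM b V + 2 * μ * κ + (κ + 4 * μ ^ 2 * κ) := by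
    have h : ∀ p, ‖Y p‖ ≤ ((V p + μ * κ) + (μ * κ⁻¹) * θ p) + ‖X p‖ := by
      intro p
      have h1 : ‖Y p‖ ≤ ‖X p + dtJ (Y p)‖ + ‖X p‖ := by
        have : dtJ (Y p) = (X p + dtJ (Y p)) - X p := by abel
        calc ‖Y p‖ = ‖dtJ (Y p)‖ := (nJ _).symm
          _ = ‖(X p + dtJ (Y p)) - X p‖ := by rw [← this]
          _ ≤ _ := norm_sub_le _ _
      have hk : 0 ≤ κ⁻¹ * θ p := mul_nonneg (inv_nonneg.2 hκ.le) (hθ p)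
      have hkk : κ * (κ⁻¹ * θ p) = θ p := mul_inv_cancel_left₀ hκ.ne' _
      have h2 : ‖X p + dtJ (Y p)‖ ≤ V p + μ * (κ + κ⁻¹ * θ p) := by
        have hnn : 0 ≤ V p + μ * (κ + κ⁻¹ * θ p) := add_nonneg (hV p) (by positivity)
        refine (sq_le_sq₀ (norm_nonneg _) hnn).1 ?_
        refine (hq p).trans ?_
        have h3 : θ p ≤ (κ + κ⁻¹ * θ p) ^ 2 := by nlinarith [hθ p, sq_nonneg (κ⁻¹ * θ p), sq_nonneg κ]
        have h4 := mul_le_mul_of_nonneg_left h3 hμ2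
        have h5 : 0 ≤ V p * (μ * (κ + κ⁻¹ * θ p)) := mul_nonneg (hV p) (by positivity)
        nlinarith
      linarith
    have h' := dtM_mono (b := b) (by fun_prop) (by fun_prop) h
    rw [dtM_add (by fun_prop) (by fun_prop), dtM_add (by fun_prop) (by fun_prop), dtM_add (by fun_prop) (by fun_prop), dtM_const, dtM_const_mul] at h'
    have := mul_le_mul_of_nonneg_left hmk hμ0.le
    linarith
  have hx' : x2 ≤ 4 * μ ^ 2 * κ := hx.trans (mul_le_mul_of_nonneg_left hκ2 (by positivity))
  have a1 : |a| * dtM b (fun p => ‖X p‖) ≤ 1/2 * (κ + 4 * μ ^ 2 * κ) :=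
    mul_le_mul ha MX (by
      have := dtM_mono (b := b) (f := fun _ => 0) (g := fun p => ‖X p‖) continuous_const (by fun_prop) (fun p => by positivity)
      rwa [dtM_const] at this) (by norm_num)
  have a2 : |a| * x2 ≤ 1/2 * (4 * μ ^ 2 * κ) := mul_le_mul ha hx' hx0 (by norm_num)
  have a3 := mul_le_mul_of_nonneg_left MY hb0.le
  have a4 := mul_le_mul_of_nonneg_left MXY hb0.le
  linarith


theorem dtM_eq_zero {b : ℝ} {f : ℝ × ℝ → ℝ} (hf : Continuous f) (h0 : ∀ p, 0 ≤ f p) (h : dtM b f ≤ 0) :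
    ∀ s ∈ Set.Icc (0:ℝ) 1, ∀ t ∈ Set.Icc (0:ℝ) 1, f (s, t * b) = 0 := by
  intro s hs t ht
  by_contra hne
  have hpos : 0 < f (s, t * b) := lt_of_le_of_ne (h0 _) (Ne.symm hne)
  have i1 : 0 < ∫ s in (0:ℝ)..1, f (s, t * b) :=
    intervalIntegral.integral_pos zero_lt_one (hf.comp (by fun_prop : Continuous fun s : ℝ => (s, t * b))).continuousOn
      (fun s _ => h0 _) ⟨s, hs, hpos⟩
  have i2 : 0 < dtM b f :=
    intervalIntegral.integral_pos zero_lt_one (dtM_outer hf).continuousOn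
      (fun t _ => intervalIntegral.integral_nonneg zero_le_one (fun s _ => h0 _)) ⟨t, ht, i1⟩
  linarith

theorem dtM_shear' {b : ℝ} {f : ℝ × ℝ → ℝ} (c : ℝ) (hper : ∀ p, f (p + (1, 0)) = f p) :
    ∫ t in (0:ℝ)..1, ∫ s in (0:ℝ)..1, f (s + t * c, t * b) = dtM b f := by
  unfold dtM
  congr 1; funext t
  have hp : Function.Periodic (fun s => f (s, t * b)) 1 := by
    intro s
    have := hper (s, t * b)
    simpa using this
  rw [integral_comp_add_right (fun s => f (s, t * b))]
  have := hp.intervalIntegral_add_eq (t * c) 0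
  simp only [zero_add] at this ⊢
  rw [add_comm]
  exact this

theorem dt_bdd {f : ℝ × ℝ → ℝ} (hf : Continuous f) (a b : ℝ) (hb : 0 < b) (p1 : ∀ p, f (p + (1, 0)) = f p)
    (p2 : ∀ p, f (p + (a, b)) = f p) : ∃ B, ∀ p, f p ≤ B := by
  obtain ⟨B, hB⟩ := ((isCompact_Icc (a := (0:ℝ)) (b := 1)).prod (isCompact_Icc (a := (0:ℝ)) (b := 1))).bddAbove_image
    (f := fun q : ℝ × ℝ => f (q.1, q.2 * b)) (by fun_prop)
  refine ⟨B, fun p => ?_⟩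
  obtain ⟨s, hs, t, ht, h⟩ := dt_reduce f a b hb p1 p2 p
  rw [h]
  exact hB ⟨(s, t), ⟨hs, ht⟩, rfl⟩


/-- Theorem 4.4 (uniqueness, non-trivial spin structure): if equality `λ² · Area = π²/b`
holds for a positive Dirac eigenvalue of the conformal metric `e^{2ω} g_{a,b}` on the torus
with the non-trivial spin structure (`|a| ≤ 1/2`, `b > π/2`), then `ω` is constant, i.e.
the flat metric is the unique smooth minimiser. -/
theorem dirac_first_eigenvalue_flat_torus_nontrivial_spin_unique_minimiser
    (a b lam : ℝ) (ha : |a| ≤ 1 / 2) (hb : b > Real.pi / 2)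
    (ω : ℝ × ℝ → ℝ) (hω : ContDiff ℝ (⊤ : ℕ∞) ω)
    (hω1 : ∀ p : ℝ × ℝ, ω (p.1 + 1, p.2) = ω p)
    (hω2 : ∀ p : ℝ × ℝ, ω (p.1 + a, p.2 + b) = ω p)
    (hlam : 0 < lam)
    (φ : ℝ × ℝ → ℂ × ℂ) (hφ : ContDiff ℝ (⊤ : ℕ∞) φ) (hφ0 : φ ≠ 0)
    (hφ1 : ∀ p : ℝ × ℝ, φ (p.1 + 1, p.2) = φ p)
    (hφ2 : ∀ p : ℝ × ℝ, φ (p.1 + a, p.2 + b) = -φ p)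
    (heq1 : ∀ p : ℝ × ℝ,
      dX (fun q => (φ q).2) p - Complex.I * dY (fun q => (φ q).2) p
        = (lam : ℂ) * Real.exp (ω p) * (φ p).1)
    (heq2 : ∀ p : ℝ × ℝ,
      -(dX (fun q => (φ q).1) p + Complex.I * dY (fun q => (φ q).1) p)
        = (lam : ℂ) * Real.exp (ω p) * (φ p).2)
    (hequality : lam ^ 2 * b *
      (∫ t in (0:ℝ)..1, ∫ s in (0:ℝ)..1, Real.exp (2 * ω (s + t * a, t * b)))
      = Real.pi ^ 2 / b) :
    ∀ p q : ℝ × ℝ, ω p = ω q := by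

  have hpi := Real.pi_gt_three
  have hb0 : 0 < b := by linarith
  set V : ℝ × ℝ → ℝ := fun p => lam * Real.exp (ω p) with hVdef
  have cω := hω.continuous
  have cV : Continuous V := by fun_prop
  have hV0 : ∀ p, 0 < V p := fun p => mul_pos hlam (Real.exp_pos _)
  have w1 : ∀ p : ℝ × ℝ, ω (p + (1, 0)) = ω p := by
    intro p; rw [← hω1 p]; congr 1; ext <;> simp
  have w2 : ∀ p : ℝ × ℝ, ω (p + (a, b)) = ω p := by
    intro p; rw [← hω2 p]; congr 1
  have v1 : ∀ p : ℝ × ℝ, V (p + (1, 0)) = V p := fun p => by simp only [hVdef, w1]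
  have v2 : ∀ p : ℝ × ℝ, V (p + (a, b)) = V p := fun p => by simp only [hVdef, w2]
  have k1 : ∀ p : ℝ × ℝ, φ (p + (1, 0)) = φ p := by
    intro p; rw [← hφ1 p]; congr 1; ext <;> simp
  have k2 : ∀ p : ℝ × ℝ, φ (p + (a, b)) = - φ p := by
    intro p; rw [← hφ2 p]; congr 1
  set f1 : ℝ × ℝ → ℂ := fun q => (φ q).1 with hf1
  set f2 : ℝ × ℝ → ℂ := fun q => (φ q).2 with hf2
  have s1 : ContDiff ℝ (⊤ : ℕ∞) f1 := hφ.fst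
  have s2 : ContDiff ℝ (⊤ : ℕ∞) f2 := hφ.snd
  have e1 : ∀ p, fderiv ℝ f1 p (1, 0) + Complex.I * fderiv ℝ f1 p (0, 1) = - ((V p : ℂ) * f2 p) := by
    intro p
    have := heq2 p
    simp only [dX, dY] at this
    rw [hVdef]; push_cast
    rw [Complex.ofReal_exp] at this
    linear_combination -this
  have e2 : ∀ p, fderiv ℝ f2 p (1, 0) - Complex.I * fderiv ℝ f2 p (0, 1) = (V p : ℂ) * f1 p := by
    intro p
    have := heq1 p
    simp only [dX, dY] at this
    rw [hVdef]; push_cast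
    rw [Complex.ofReal_exp] at this
    linear_combination this
  have p1 : ∀ p, f1 (p + (1, 0)) = f1 p := fun p => by simp only [hf1, k1]
  have p2 : ∀ p, f2 (p + (1, 0)) = f2 p := fun p => by simp only [hf2, k1]
  have q1 : ∀ p, f1 (p + (a, b)) = - f1 p := fun p => by simp only [hf1, k2, Prod.fst_neg]
  have q2 : ∀ p, f2 (p + (a, b)) = - f2 p := fun p => by simp only [hf2, k2, Prod.snd_neg]
  set u : ℝ × ℝ → ℝ := fun p => Complex.normSq (f1 p) + Complex.normSq (f2 p) with hu
  have cu : Continuous u := (Complex.continuous_normSq.comp s1.continuous).add (Complex.continuous_normSq.comp s2.continuous)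
  have hu0 : ∀ p, 0 ≤ u p := fun p => add_nonneg (Complex.normSq_nonneg _) (Complex.normSq_nonneg _)
  obtain ⟨U, hU⟩ := dt_bdd cu a b hb0 (fun p => by simp only [hu, p1, p2]) (fun p => by simp only [hu, q1, q2, Complex.normSq_neg])
  obtain ⟨B, hB⟩ := dt_bdd (f := fun p => V p ^ 2) (by fun_prop) a b hb0 (fun p => by simp only [v1]) (fun p => by simp only [v2])
  obtain ⟨p0, hp0⟩ : ∃ p0, 0 < u p0 := by
    by_contra hcon
    push_neg at hcon
    apply hφ0
    funext p
    have h1 := Complex.normSq_nonneg (f1 p)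
    have h2 := Complex.normSq_nonneg (f2 p)
    have h3 : Complex.normSq (f1 p) + Complex.normSq (f2 p) ≤ 0 := hcon p
    exact Prod.ext (Complex.normSq_eq_zero.1 (by linarith)) (Complex.normSq_eq_zero.1 (by linarith))
  obtain ⟨μ, hμ⟩ : ∃ μ, μ = Real.pi / b := ⟨_, rfl⟩
  have hμ0 : 0 < μ := by rw [hμ]; positivity
  have hbμ : Real.pi = b * μ := by rw [hμ]; field_simp
  have hB0 : 0 ≤ B := (sq_nonneg _).trans (hB p0)
  have main := fun δ hδ => dt_concrete a b ha hb0 s1 s2 V e1 e2 p1 p2 q1 q2 u hu μ δ hμ hδ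
  have hMV : dtM b (fun p => V p ^ 2) = μ ^ 2 := by
    have h := dtM_shear' (b := b) (f := fun p => Real.exp (2 * ω p)) a (fun p => by simp only [w1])
    rw [h] at hequality
    have e : (fun p => V p ^ 2) = fun p => lam ^ 2 * Real.exp (2 * ω p) := by
      funext p
      rw [hVdef]; simp only
      rw [mul_pow, ← Real.exp_nat_mul]; norm_num
    rw [e, dtM_const_mul]
    have : b * (lam ^ 2 * dtM b (fun p => Real.exp (2 * ω p))) = b * μ ^ 2 := by
      rw [hμ]; field_simp; field_simp at hequality; linarith
    exact mul_left_cancel₀ hb0.ne' this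
  have hlapl : ∀ δ, 0 < δ → ∀ p, -(B + μ ^ 2) ≤ dtLap (fun p => 1/2 * Real.log (u p + 2 * δ ^ 2)) p := by
    intro δ hδ p
    obtain ⟨X, Y, cX, cY, hs, hq, hL, -⟩ := main δ hδ
    rw [hL]
    have hw : 0 < u p + 2 * δ ^ 2 := by have := hu0 p; positivity
    have h1 : ‖X p + dtJ (Y p)‖ ^ 2 ≤ B + μ ^ 2 := by
      refine le_of_mul_le_mul_right ?_ hw
      rw [hq]
      have a1 := mul_le_mul_of_nonneg_right (hB p) (hu0 p)
      have a2 : 0 ≤ B * (2 * δ ^ 2) := by positivity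
      have a3 : 0 ≤ μ ^ 2 * u p := mul_nonneg (sq_nonneg _) (hu0 p)
      linarith
    rw [norm_add_sq_real, dt_normJ dtJ_skew dtJ_sq] at h1
    have h2 := dtJ_skew (X p) (Y p)
    have h3 := abs_le.1 (abs_real_inner_le_norm (dtJ (X p)) (Y p))
    rw [dt_normJ dtJ_skew dtJ_sq] at h3
    have h4 := sq_nonneg (‖X p‖ - ‖Y p‖)
    have h5 : 0 ≤ B + μ ^ 2 := by positivity
    nlinarith
  have hest : ∀ κ, 0 < κ → κ ≤ 1 → Real.pi ≤ b * dtM b V + (1/2 + 4 * μ ^ 2 + b * (1 + 2 * μ + 10 * μ ^ 2)) * κ := by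
    intro κ hκ hκ1
    obtain ⟨δ, hδ, hm⟩ := dt_theta b hb0 u cu hu0 U hU p0 hp0 (B + μ ^ 2) (by positivity)
      (fun δ hδ => (main δ hδ).choose_spec.choose_spec.2.2.1) hlapl (κ ^ 2) (by positivity)
    obtain ⟨X, Y, cX, cY, hs, hq, hL, t1, t2, t3⟩ := main δ hδ
    have hw : ∀ p, 0 < u p + 2 * δ ^ 2 := fun p => by have := hu0 p; positivity
    refine dt_est a b μ ha hb hμ cX cY cV (θ := fun p => 2 * δ ^ 2 / (u p + 2 * δ ^ 2))
      (Continuous.div (by fun_prop) (by fun_prop) (fun p => (hw p).ne')) (fun p => (hV0 p).le)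
      (fun p => div_nonneg (by positivity) (hw p).le) ?_ hMV κ hκ hκ1 hm t1 t2 t3
    intro p
    refine le_of_mul_le_mul_right ?_ (hw p)
    rw [hq, add_mul, mul_assoc (μ ^ 2), div_mul_cancel₀ _ (hw p).ne']
    have : 0 ≤ V p ^ 2 * (2 * δ ^ 2) := by positivity
    linarith
  have hMVl : μ ≤ dtM b V := by
    have : Real.pi ≤ b * dtM b V := by
      apply le_of_forall_pos_le_add
      intro ε hε
      set C := 1/2 + 4 * μ ^ 2 + b * (1 + 2 * μ + 10 * μ ^ 2) with hC
      have hC0 : 0 < C := by positivity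
      have h := hest (min 1 (ε / C)) (lt_min one_pos (by positivity)) (min_le_left _ _)
      have h2 : C * min 1 (ε / C) ≤ ε := by
        calc C * min 1 (ε / C) ≤ C * (ε / C) := mul_le_mul_of_nonneg_left (min_le_right _ _) hC0.le
          _ = ε := by field_simp
      linarith
    rw [hbμ] at this
    exact le_of_mul_le_mul_left this hb0
  have hfin : dtM b (fun p => (V p - μ) ^ 2) ≤ 0 := by
    have e : (fun p => (V p - μ) ^ 2) = fun p => (V p ^ 2 + (-2 * μ) * V p) + μ ^ 2 := by
      funext p; ring
    rw [e, dtM_add (by fun_prop) (by fun_prop), dtM_add (by fun_prop) (by fun_prop), dtM_const_mul, dtM_const, hMV]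
    nlinarith
  have hVμ : ∀ p, V p = μ := by
    intro p
    obtain ⟨s, hs, t, ht, h⟩ := dt_reduce V a b hb0 v1 v2 p
    have := dtM_eq_zero (b := b) (f := fun p => (V p - μ) ^ 2) (by fun_prop) (fun p => sq_nonneg _) hfin s hs t ht
    rw [h]
    exact sub_eq_zero.1 (pow_eq_zero_iff two_ne_zero |>.1 this)
  intro p q
  have h : lam * Real.exp (ω p) = lam * Real.exp (ω q) := (hVμ p).trans (hVμ q).symm
  exact Real.exp_injective (mul_left_cancel₀ hlam.ne' h)
end

section
/- Let a ∈ ℝ with |a| ≤ 1/2 and b > 0 with b² + (|a| − 1/2)² ≥ 1/4, and let Γ = ℤ(1,0) + ℤ(a,b). Then: (i) there exists a smooth φ : ℝ² → ℂ², not identically zero, with φ(p + (1,0)) = φ(p) and φ(p + (a,b)) = −φ(p) for all p ∈ ℝ², satisfying (∂ₓ − i∂_y)φ₂ = (π/b) φ₁ and −(∂ₓ + i∂_y)φ₁ = (π/b) φ₂; (ii) for every λ with 0 < λ < π/b there is no such nonzero smooth equivariant solution of (∂ₓ − i∂_y)φ₂ = λφ₁, −(∂ₓ + i∂_y)φ₁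 = λφ₂. (The first positive Dirac eigenvalue of the flat torus with the non-trivial spin structure is λ₁(𝕋², g_{a,b}, S₁) = π/b.) -/
open Complex in
lemma fourier_unique (f : ℝ → ℂ) (hf : Continuous f) (hp : Function.Periodic f 1)
    (h : ∀ n : ℤ, ∫ x in (0:ℝ)..1, f x * exp (-(2 * Real.pi * I * n * x)) = 0) (x : ℝ) : f x = 0 := by
  have : Fact ((0:ℝ) < 1) := ⟨one_pos⟩
  let F : C(AddCircle (1:ℝ), ℂ) := ⟨hp.lift, by
    exact continuous_coinduced_dom.mpr hf⟩
  have hc : ∀ n, fourierCoeff F n = 0 := by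
    intro n
    rw [fourierCoeff_eq_intervalIntegral F n 0, zero_add, div_one, one_smul, ← h n]
    apply intervalIntegral.integral_congr
    intro x _
    simp only [fourier_coe_apply, smul_eq_mul]
    rw [mul_comm]
    congr 1
    congr 1
    push_cast
    ring
  have := has_pointwise_sum_fourier_series_of_summable (f := F) (by
    have : fourierCoeff F = 0 := funext hc
    rw [this]; exact summable_zero) (x : AddCircle (1:ℝ))
  simp only [hc, zero_smul] at this
  exact this.unique hasSum_zero

lemma arith (a b : ℝ) (ha : |a| ≤ 1 / 2) 
    (hab : 1 / 4 ≤ b ^ 2 + (|a| - 1 / 2) ^ 2) (n m : ℤ) :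
    1 / 4 ≤ (n:ℝ)^2 * b^2 + (m + 1/2 - n * a)^2 := by
  have key : ∀ (t : ℝ) (s m : ℤ), 0 ≤ t → t ≤ 1/2 → 1/4 ≤ b^2 + (t-1/2)^2 →
      1 / 4 ≤ (s:ℝ)^2 * b^2 + (m + 1/2 - s * t)^2 := by
    intro t s m h0 h1 h2
    have e1 : (0:ℝ) ≤ m * (m+1) := by
      have : 0 ≤ m * (m+1) := by
        rcases le_or_gt 0 m with h | h <;> nlinarith
      exact_mod_cast this
    have e2 : (0:ℝ) ≤ (s-m)*(s-m-1) := by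
      have : 0 ≤ (s-m) * (s-m-1) := by
        rcases le_or_gt (s-m) 0 with h | h <;> nlinarith
      exact_mod_cast this
    have e3 : (s:ℝ)^2 * (t - t^2) ≤ (s:ℝ)^2 * b^2 := by
      apply mul_le_mul_of_nonneg_left _ (sq_nonneg _); nlinarith
    have e4 := mul_nonneg h0 e2
    have e5 := mul_nonneg h0 e1
    have e6 := mul_nonneg (sub_nonneg.2 h1) e1
    nlinarith
  rcases abs_cases a with ⟨h, hs⟩ | ⟨h, hs⟩
  · rw [h] at ha hab; exact key a n m hs ha hab
  · rw [h] at ha hab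
    have := key (-a) (-n) m (by linarith) ha hab
    push_cast at this
    nlinarith

open MeasureTheory in
lemma MeasureTheory.intervalIntegral_swap_of_cont (f : ℝ → ℝ → ℂ) (hf : Continuous (Function.uncurry f)) :
    (∫ t in (0:ℝ)..1, ∫ s in (0:ℝ)..1, f t s) = ∫ s in (0:ℝ)..1, ∫ t in (0:ℝ)..1, f t s := by
  simp only [intervalIntegral.integral_of_le zero_le_one]
  apply integral_integral_swap
  rw [Measure.prod_restrict]
  exact (hf.continuousOn.integrableOn_compact (isCompact_Icc.prod isCompact_Icc)).mono_set
    (Set.prod_mono Set.Ioc_subset_Icc_self Set.Ioc_subset_Icc_self)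

lemma sheared_deriv (a b : ℝ) (G : ℝ × ℝ → ℂ) (hG : ContDiff ℝ 1 G)
    (h1 : ∀ p : ℝ × ℝ, G (p.1 + 1, p.2) = G p) (h2 : ∀ p : ℝ × ℝ, G (p.1 + a, p.2 + b) = G p)
    (hb : b ≠ 0) :
    (∫ t in (0:ℝ)..1, ∫ s in (0:ℝ)..1, dX G (s + t * a, t * b)) = 0 ∧
    (∫ t in (0:ℝ)..1, ∫ s in (0:ℝ)..1, dY G (s + t * a, t * b)) = 0 := by
  have hd : Differentiable ℝ G := hG.differentiable one_ne_zero
  have hfc : Continuous (fderiv ℝ G) := hG.continuous_fderiv one_ne_zero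
  have cX : Continuous (dX G) := hfc.clm_apply continuous_const
  have cY : Continuous (dY G) := hfc.clm_apply continuous_const
  have dS : ∀ s t : ℝ, HasDerivAt (fun s => G (s + t * a, t * b)) (dX G (s + t * a, t * b)) s := by
    intro s t
    have e : HasDerivAt (fun s : ℝ => (s + t * a, t * b)) ((1:ℝ), (0:ℝ)) s :=
      ((hasDerivAt_id s).add_const _).prodMk (hasDerivAt_const _ _)
    exact (hd _).hasFDerivAt.comp_hasDerivAt s e
  have dT : ∀ s t : ℝ, HasDerivAt (fun t => G (s + t * a, t * b))
      (a * dX G (s + t * a, t * b) + b * dY G (s + t * a, t * b)) t := by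
    intro s t
    have e : HasDerivAt (fun t : ℝ => (s + t * a, t * b)) ((a:ℝ), (b:ℝ)) t := by
      have := (((hasDerivAt_id t).mul_const a).const_add s).prodMk ((hasDerivAt_id t).mul_const b)
      simpa using this
    have := (hd _).hasFDerivAt.comp_hasDerivAt t e
    have e2 : a * dX G (s + t * a, t * b) + b * dY G (s + t * a, t * b)
      = fderiv ℝ G (s + t * a, t * b) (a, b) := ?_
    · rw [e2]; exact this
    have : ((a, b) : ℝ × ℝ) = a • (1, 0) + b • (0, 1) := by simp
    rw [this, map_add, map_smul, map_smul]
    simp [dX, dY]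
  have X0 : (∫ t in (0:ℝ)..1, ∫ s in (0:ℝ)..1, dX G (s + t * a, t * b)) = 0 := by
    have : ∀ t : ℝ, ∫ s in (0:ℝ)..1, dX G (s + t * a, t * b) = 0 := by
      intro t
      rw [intervalIntegral.integral_eq_sub_of_hasDerivAt (fun s _ => dS s t)
        ((by fun_prop : Continuous _).intervalIntegrable _ _)]
      have := h1 (0 + t * a, t * b)
      rw [← this]; simp [add_comm]
    simp [this]
  refine ⟨X0, ?_⟩
  have T0 : (∫ t in (0:ℝ)..1, ∫ s in (0:ℝ)..1,
      (a * dX G (s + t * a, t * b) + b * dY G (s + t * a, t * b))) = 0 := by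
    rw [MeasureTheory.intervalIntegral_swap_of_cont (f := fun t s => (a * dX G (s + t * a, t * b) + b * dY G (s + t * a, t * b))) (by unfold Function.uncurry; fun_prop)]
    · have : ∀ s : ℝ, ∫ t in (0:ℝ)..1,
        (a * dX G (s + t * a, t * b) + b * dY G (s + t * a, t * b)) = 0 := by
        intro s
        rw [intervalIntegral.integral_eq_sub_of_hasDerivAt (fun t _ => dT s t)
          ((by fun_prop : Continuous _).intervalIntegrable _ _)]
        have := h2 (s, 0)
        simp at this
        simp [this]
      simp [this]
  have ii : ∀ t : ℝ, ∫ s in (0:ℝ)..1, (a * dX G (s + t * a, t * b) + b * dY G (s + t * a, t * b))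
      = a * (∫ s in (0:ℝ)..1, dX G (s + t * a, t * b)) + b * ∫ s in (0:ℝ)..1, dY G (s + t * a, t * b) := by
    intro t
    rw [intervalIntegral.integral_add ((by fun_prop : Continuous _).intervalIntegrable _ _)
      ((by fun_prop : Continuous _).intervalIntegrable _ _)]
    simp
  simp only [ii] at T0
  rw [intervalIntegral.integral_add, intervalIntegral.integral_const_mul,
    intervalIntegral.integral_const_mul, X0] at T0
  · simpa [hb] using T0
  · apply Continuous.intervalIntegrable
    apply Continuous.mul continuous_const
    apply intervalIntegral.continuous_parametric_intervalIntegral_of_continuous'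
    fun_prop
  · apply Continuous.intervalIntegrable
    apply Continuous.mul continuous_const
    apply intervalIntegral.continuous_parametric_intervalIntegral_of_continuous'
    fun_prop

open Complex in
/-- The plane wave. -/
noncomputable def pw (n k : ℝ) (p : ℝ × ℝ) : ℂ := exp (-(2 * Real.pi * I * (n * p.1 + k * p.2)))

lemma pw_contDiff (n k : ℝ) : ContDiff ℝ 1 (pw n k) := by
  unfold pw
  have h1 : ContDiff ℝ 1 (fun p : ℝ × ℝ => (p.1 : ℂ)) := Complex.ofRealCLM.contDiff.comp contDiff_fst
  have h2 : ContDiff ℝ 1 (fun p : ℝ × ℝ => (p.2 : ℂ)) := Complex.ofRealCLM.contDiff.comp contDiff_snd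
  fun_prop

open Complex in
lemma pw_deriv (n k : ℝ) (p : ℝ × ℝ) : dX (pw n k) p = -(2 * Real.pi * I * n) * pw n k p ∧
    dY (pw n k) p = -(2 * Real.pi * I * k) * pw n k p := by
  have h1 : HasFDerivAt (fun p : ℝ × ℝ => (p.1 : ℂ)) (ofRealCLM.comp (ContinuousLinearMap.fst ℝ ℝ ℝ)) p :=
    (ofRealCLM.comp (ContinuousLinearMap.fst ℝ ℝ ℝ)).hasFDerivAt
  have h2 : HasFDerivAt (fun p : ℝ × ℝ => (p.2 : ℂ)) (ofRealCLM.comp (ContinuousLinearMap.snd ℝ ℝ ℝ)) p :=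
    (ofRealCLM.comp (ContinuousLinearMap.snd ℝ ℝ ℝ)).hasFDerivAt
  have h3 := (((h1.const_mul (n:ℂ)).add (h2.const_mul (k:ℂ))).const_mul (2 * Real.pi * I)).neg.cexp
  have h4 : HasFDerivAt (pw n k) _ p := h3
  unfold dX dY
  rw [h4.fderiv]
  constructor <;> simp [pw] <;> ring

lemma dX_mul (f g : ℝ × ℝ → ℂ) (hf : ContDiff ℝ 1 f) (hg : ContDiff ℝ 1 g) (p : ℝ × ℝ) :
    dX (fun q => f q * g q) p = dX f p * g p + f p * dX g p := by
  have := ((hf.differentiable one_ne_zero p).hasFDerivAt.mul (hg.differentiable one_ne_zero p).hasFDerivAt)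
  unfold dX
  have h4 : HasFDerivAt (fun q => f q * g q) _ p := this
  rw [h4.fderiv]
  simp; ring

lemma dY_mul (f g : ℝ × ℝ → ℂ) (hf : ContDiff ℝ 1 f) (hg : ContDiff ℝ 1 g) (p : ℝ × ℝ) :
    dY (fun q => f q * g q) p = dY f p * g p + f p * dY g p := by
  have := ((hf.differentiable one_ne_zero p).hasFDerivAt.mul (hg.differentiable one_ne_zero p).hasFDerivAt)
  unfold dY
  have h4 : HasFDerivAt (fun q => f q * g q) _ p := this
  rw [h4.fderiv]
  simp; ring

/-- Mean over the sheared cell. -/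
noncomputable def mean (a b : ℝ) (f : ℝ × ℝ → ℂ) : ℂ :=
  ∫ t in (0:ℝ)..1, ∫ s in (0:ℝ)..1, f (s + t * a, t * b)

lemma mean_add (a b : ℝ) (f g : ℝ × ℝ → ℂ) (hf : Continuous f) (hg : Continuous g) :
    mean a b (fun p => f p + g p) = mean a b f + mean a b g := by
  unfold mean
  have : ∀ t : ℝ, ∫ s in (0:ℝ)..1, (f (s + t * a, t * b) + g (s + t * a, t * b)) =
      (∫ s in (0:ℝ)..1, f (s + t * a, t * b)) + ∫ s in (0:ℝ)..1, g (s + t * a, t * b) := by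
    intro t
    exact intervalIntegral.integral_add ((by fun_prop : Continuous _).intervalIntegrable _ _)
      ((by fun_prop : Continuous _).intervalIntegrable _ _)
  simp only [this]
  apply intervalIntegral.integral_add
  all_goals
    apply Continuous.intervalIntegrable
    apply intervalIntegral.continuous_parametric_intervalIntegral_of_continuous'
    fun_prop

lemma mean_mul (a b : ℝ) (c : ℂ) (f : ℝ × ℝ → ℂ) :
    mean a b (fun p => c * f p) = c * mean a b f := by
  unfold mean
  simp

open Complex in
lemma pw_shift (a b : ℝ) (hb : 0 < b) (n m : ℤ) (p : ℝ × ℝ) :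
    pw n ((m + 1/2 - n * a) / b) (p.1 + 1, p.2) = pw n ((m + 1/2 - n * a) / b) p ∧
    pw n ((m + 1/2 - n * a) / b) (p.1 + a, p.2 + b) = - pw n ((m + 1/2 - n * a) / b) p := by
  have hbc : (b:ℂ) ≠ 0 := by exact_mod_cast hb.ne'
  unfold pw
  constructor
  · have : exp (-(n * (2 * Real.pi * I))) = 1 := by
      rw [exp_neg, exp_int_mul_two_pi_mul_I, inv_one]
    rw [← mul_one (exp (-(2 * Real.pi * I * (_ * p.1 + _)))), ← this, ← exp_add]
    congr 1
    push_cast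
    ring
  · have : exp (-((m : ℂ) * (2 * Real.pi * I)) + - (Real.pi * I)) = -1 := by
      rw [exp_add, exp_neg, exp_int_mul_two_pi_mul_I, exp_neg, exp_pi_mul_I]; norm_num
    rw [← mul_neg_one (exp (-(2 * Real.pi * I * (_ * p.1 + _)))), ← this, ← exp_add]
    congr 1
    push_cast
    field_simp
    ring

open Complex in
lemma coef (a b : ℝ) (hb : 0 < b) (n m : ℤ) (f : ℝ × ℝ → ℂ) (hf : ContDiff ℝ 1 f)
    (h1 : ∀ p : ℝ × ℝ, f (p.1 + 1, p.2) = f p) (h2 : ∀ p : ℝ × ℝ, f (p.1 + a, p.2 + b) = - f p)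
    (k : ℝ) (hk : k = (m + 1/2 - n * a) / b) :
    mean a b (fun p => dX f p * pw n k p) = 2 * Real.pi * I * n * mean a b (fun p => f p * pw n k p) ∧
    mean a b (fun p => dY f p * pw n k p) = 2 * Real.pi * I * k * mean a b (fun p => f p * pw n k p) := by
  have hE := pw_contDiff n k
  have hG := hf.mul hE
  have hfc : Continuous (fderiv ℝ f) := hf.continuous_fderiv one_ne_zero
  have cX : Continuous (dX f) := hfc.clm_apply continuous_const
  have cY : Continuous (dY f) := hfc.clm_apply continuous_const
  have cf := hf.continuous
  have cE := hE.continuous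
  have key := sheared_deriv a b (fun p => f p * pw n k p) hG
    (by intro p; simp only [h1, hk, (pw_shift a b hb n m p).1])
    (by intro p; simp only [h2, hk, (pw_shift a b hb n m p).2]; ring) hb.ne'
  obtain ⟨kx, ky⟩ := key
  change mean a b _ = 0 at kx ky
  have ex : dX (fun p => f p * pw n k p) =
      fun p => dX f p * pw n k p + (-(2 * Real.pi * I * n)) * (f p * pw n k p) := by
    funext p; rw [dX_mul _ _ hf hE, (pw_deriv _ _ p).1]; push_cast; ring
  have ey : dY (fun p => f p * pw n k p) =
      fun p => dY f p * pw n k p + (-(2 * Real.pi * I * k)) * (f p * pw n k p) := by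
    funext p; rw [dY_mul _ _ hf hE, (pw_deriv _ _ p).2]; ring
  rw [ex, mean_add _ _ _ _ (by fun_prop) (by fun_prop), mean_mul] at kx
  rw [ey, mean_add _ _ _ _ (by fun_prop) (by fun_prop), mean_mul] at ky
  constructor
  · linear_combination kx
  · linear_combination ky

open Complex in
lemma zero_of_coef (a b : ℝ) (hb : 0 < b) (f : ℝ × ℝ → ℂ) (cf : Continuous f)
    (h1 : ∀ p : ℝ × ℝ, f (p.1 + 1, p.2) = f p) (h2 : ∀ p : ℝ × ℝ, f (p.1 + a, p.2 + b) = - f p)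
    (h : ∀ n m : ℤ, mean a b (fun p => f p * pw n ((m + 1/2 - n * a) / b) p) = 0) (p : ℝ × ℝ) :
    f p = 0 := by
  have hbc : (b:ℂ) ≠ 0 := by exact_mod_cast hb.ne'
  have step1 : ∀ (n : ℤ) (t : ℝ), 
      (∫ s in (0:ℝ)..1, f (s + t * a, t * b) * exp (-(2 * Real.pi * I * n * s))) * exp (-(Real.pi * I * t)) = 0 := by
    intro n
    apply fourier_unique
    · apply Continuous.mul _ (by fun_prop)
      apply intervalIntegral.continuous_parametric_intervalIntegral_of_continuous'
      fun_prop
    · intro t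
      have e1 : exp (-(Real.pi * I * ((t + 1 : ℝ) : ℂ))) = - exp (-(Real.pi * I * t)) := by
        have : exp (- (Real.pi * I)) = -1 := by
          rw [exp_neg, exp_pi_mul_I]; norm_num
        rw [← mul_neg_one (exp _), ← this, ← exp_add]; congr 1; push_cast; ring
      have e2 : ∀ s : ℝ, f (s + (t+1) * a, (t+1) * b) = - f (s + t * a, t * b) := by
        intro s
        rw [← h2]; congr 2 <;> ring
      simp only [e1, e2, neg_mul, intervalIntegral.integral_neg, mul_neg, neg_neg]
    · intro m
      rw [← h n m]
      unfold mean
      apply intervalIntegral.integral_congr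
      intro t _
      simp only
      rw [mul_assoc, ← exp_add, ← intervalIntegral.integral_mul_const]
      apply intervalIntegral.integral_congr
      intro s _
      simp only [pw]
      rw [mul_assoc, ← exp_add]
      congr 2
      push_cast
      field_simp
      ring
  have step2 : ∀ t s : ℝ, f (s + t * a, t * b) = 0 := by
    intro t
    apply fourier_unique
    · fun_prop
    · intro s
      change f (s + 1 + t * a, t * b) = f (s + t * a, t * b)
      rw [← h1 (s + t * a, t * b)]; congr 2; ring
    · intro n
      exact (mul_eq_zero.1 (step1 n t)).resolve_right (exp_ne_zero _)
  have := step2 (p.2 / b) (p.1 - p.2 / b * a)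
  rw [div_mul_cancel₀ _ hb.ne'] at this
  simpa using this

open Complex in
lemma part_two (a b : ℝ) (ha : |a| ≤ 1 / 2) (hb : 0 < b)
    (hab : 1 / 4 ≤ b ^ 2 + (|a| - 1 / 2) ^ 2) (lam : ℝ) (h0 : 0 < lam) (hl : lam < Real.pi / b)
    (f g : ℝ × ℝ → ℂ) (hf : ContDiff ℝ 1 f) (hg : ContDiff ℝ 1 g)
    (hf1 : ∀ p : ℝ × ℝ, f (p.1 + 1, p.2) = f p) (hf2 : ∀ p : ℝ × ℝ, f (p.1 + a, p.2 + b) = - f p)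
    (hg1 : ∀ p : ℝ × ℝ, g (p.1 + 1, p.2) = g p) (hg2 : ∀ p : ℝ × ℝ, g (p.1 + a, p.2 + b) = - g p)
    (e1 : ∀ p, dX g p - I * dY g p = lam * f p) (e2 : ∀ p, -(dX f p + I * dY f p) = lam * g p)
    (p : ℝ × ℝ) : f p = 0 ∧ g p = 0 := by
  have hl0 : (lam : ℂ) ≠ 0 := by exact_mod_cast h0.ne'
  have key : ∀ n m : ℤ, mean a b (fun p => f p * pw n ((m + 1/2 - n * a) / b) p) = 0 ∧
      mean a b (fun p => g p * pw n ((m + 1/2 - n * a) / b) p) = 0 := by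
    intro n m
    obtain ⟨k, hk⟩ : ∃ k : ℝ, k = (m + 1/2 - n * a) / b := ⟨_, rfl⟩
    rw [← hk]
    obtain ⟨fx, fy⟩ := coef a b hb n m f hf hf1 hf2 k hk
    obtain ⟨gx, gy⟩ := coef a b hb n m g hg hg1 hg2 k hk
    have cE := (pw_contDiff n k).continuous
    have cXf : Continuous (dX f) := (hf.continuous_fderiv one_ne_zero).clm_apply continuous_const
    have cYf : Continuous (dY f) := (hf.continuous_fderiv one_ne_zero).clm_apply continuous_const
    have cXg : Continuous (dX g) := (hg.continuous_fderiv one_ne_zero).clm_apply continuous_const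
    have cYg : Continuous (dY g) := (hg.continuous_fderiv one_ne_zero).clm_apply continuous_const
    have m1 : lam * mean a b (fun p => f p * pw n k p) =
        mean a b (fun p => dX g p * pw n k p) + (-I) * mean a b (fun p => dY g p * pw n k p) := by
      rw [← mean_mul, ← mean_mul, ← mean_add _ _ _ _ (by fun_prop) (by fun_prop)]
      congr 1; funext p; linear_combination (-pw n k p) * e1 p
    have m2 : lam * mean a b (fun p => g p * pw n k p) =
        (-1) * mean a b (fun p => dX f p * pw n k p) + (-I) * mean a b (fun p => dY f p * pw n k p) := by
      rw [← mean_mul, ← mean_mul, ← mean_mul, ← mean_add _ _ _ _ (by fun_prop) (by fun_prop)]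
      congr 1; funext p; linear_combination (-pw n k p) * e2 p
    rw [gx, gy] at m1
    rw [fx, fy] at m2
    set F := mean a b (fun p => f p * pw n k p)
    set G := mean a b (fun p => g p * pw n k p)
    have hlt : lam ^ 2 < 4 * Real.pi ^ 2 * (n ^ 2 + k ^ 2) := by
      have h3 : lam ^ 2 < (Real.pi / b) ^ 2 := by gcongr
      have h4 := arith a b ha hab n m
      have h5 : k * b = m + 1/2 - n * a := by rw [hk]; field_simp
      rw [← h5] at h4
      have h6 : (Real.pi / b) ^ 2 * (1/4) ≤ (Real.pi / b) ^ 2 * ((n:ℝ)^2 * b^2 + (k*b)^2) := by gcongr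
      have h7 : (Real.pi / b) ^ 2 * ((n:ℝ)^2 * b^2 + (k*b)^2) = Real.pi ^ 2 * (n ^ 2 + k ^ 2) := by
        field_simp
      linarith
    have hne : ((4 * Real.pi ^ 2 * (n ^ 2 + k ^ 2) - lam ^ 2 : ℝ) : ℂ) ≠ 0 := by
      exact_mod_cast (sub_pos.2 hlt).ne'
    have hF : F = 0 := by
      have : ((4 * Real.pi ^ 2 * (n ^ 2 + k ^ 2) - lam ^ 2 : ℝ) : ℂ) * F = 0 := by
        push_cast
        have hI := I_sq
        linear_combination (-(lam:ℂ)) * m1 - (2 * Real.pi * I * n - I * (2 * Real.pi * I * k)) * m2 + (4 * Real.pi ^ 2 * n ^ 2 * F - 4 * Real.pi ^ 2 * k ^ 2 * F * (I ^ 2 - 1)) * hI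
      exact (mul_eq_zero.1 this).resolve_left hne
    refine ⟨hF, ?_⟩
    rw [hF] at m2
    simpa [hl0] using m2
  exact ⟨zero_of_coef a b hb f hf.continuous hf1 hf2 (fun n m => (key n m).1) p,
    zero_of_coef a b hb g hg.continuous hg1 hg2 (fun n m => (key n m).2) p⟩



/-- The first positive Dirac eigenvalue of the flat torus `ℝ²/Γ`, `Γ = ℤ(1,0) + ℤ(a,b)`
(`|a| ≤ 1/2`, `b² + (|a| - 1/2)² ≥ 1/4`), with the non-trivial spin structure
(`χ(1,0) = 0`, `χ(a,b) = 1`) is `π/b`: there is a nonzero smooth equivariant eigenspinor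
with eigenvalue `π/b`, and none with eigenvalue `λ` for any `0 < λ < π/b`. -/
theorem dirac_first_eigenvalue_flat_torus_nontrivial_spin
    (a b : ℝ) (ha : |a| ≤ 1 / 2) (hb : 0 < b)
    (hab : 1 / 4 ≤ b ^ 2 + (|a| - 1 / 2) ^ 2) :
    (∃ φ : ℝ × ℝ → ℂ × ℂ, ContDiff ℝ (⊤ : ℕ∞) φ ∧ φ ≠ 0 ∧
      (∀ p : ℝ × ℝ, φ (p.1 + 1, p.2) = φ p) ∧
      (∀ p : ℝ × ℝ, φ (p.1 + a, p.2 + b) = -φ p) ∧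
      (∀ p : ℝ × ℝ,
        dX (fun q => (φ q).2) p - Complex.I * dY (fun q => (φ q).2) p
          = ((Real.pi / b : ℝ) : ℂ) * (φ p).1) ∧
      (∀ p : ℝ × ℝ,
        -(dX (fun q => (φ q).1) p + Complex.I * dY (fun q => (φ q).1) p)
          = ((Real.pi / b : ℝ) : ℂ) * (φ p).2)) ∧
    (∀ lam : ℝ, 0 < lam → lam < Real.pi / b →
      ¬ ∃ φ : ℝ × ℝ → ℂ × ℂ, ContDiff ℝ (⊤ : ℕ∞) φ ∧ φ ≠ 0 ∧
        (∀ p : ℝ × ℝ, φ (p.1 + 1, p.2) = φ p) ∧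
        (∀ p : ℝ × ℝ, φ (p.1 + a, p.2 + b) = -φ p) ∧
        (∀ p : ℝ × ℝ,
          dX (fun q => (φ q).2) p - Complex.I * dY (fun q => (φ q).2) p
            = (lam : ℂ) * (φ p).1) ∧
        (∀ p : ℝ × ℝ,
          -(dX (fun q => (φ q).1) p + Complex.I * dY (fun q => (φ q).1) p)
            = (lam : ℂ) * (φ p).2)) := by
  constructor
  · have hbc : (b:ℂ) ≠ 0 := by exact_mod_cast hb.ne'
    have hpi : Complex.exp (Real.pi * Complex.I) = -1 := Complex.exp_pi_mul_I
    have hc : ContDiff ℝ (⊤ : ℕ∞) (fun p : ℝ × ℝ => Complex.exp (Real.pi * Complex.I * p.2 / b)) := by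
      have h2 : ContDiff ℝ (⊤ : ℕ∞) (fun p : ℝ × ℝ => (p.2 : ℂ)) :=
        Complex.ofRealCLM.contDiff.comp contDiff_snd
      fun_prop
    have hpw : (fun p : ℝ × ℝ => Complex.exp (Real.pi * Complex.I * p.2 / b)) = pw 0 (-1 / (2 * b)) := by
      funext p
      unfold pw
      congr 1
      push_cast
      field_simp
      ring
    refine ⟨fun p => (pw 0 (-1 / (2 * b)) p, pw 0 (-1 / (2 * b)) p), ?_, ?_, ?_, ?_, ?_, ?_⟩
    · rw [← hpw]; exact hc.prodMk hc
    · intro h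
      have := congrArg Prod.fst (congrFun h (0, 0))
      simp [pw] at this
    · intro p
      simp [pw]
    · intro p
      have : pw 0 (-1 / (2 * b)) (p.1 + a, p.2 + b) = - pw 0 (-1 / (2 * b)) p := by
        rw [← hpw]
        simp only
        rw [← mul_neg_one, ← hpi, ← Complex.exp_add]
        congr 1
        push_cast
        field_simp
      simp [this]
    · intro p
      have h := pw_deriv 0 (-1 / (2 * b)) p
      change dX (pw 0 (-1 / (2 * b))) p - Complex.I * dY (pw 0 (-1 / (2 * b))) p = _
      rw [h.1, h.2]
      dsimp only
      generalize pw 0 (-1 / (2 * b)) p = z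
      push_cast
      field_simp
      linear_combination (-z) * Complex.I_sq
    · intro p
      have h := pw_deriv 0 (-1 / (2 * b)) p
      change -(dX (pw 0 (-1 / (2 * b))) p + Complex.I * dY (pw 0 (-1 / (2 * b))) p) = _
      rw [h.1, h.2]
      dsimp only
      generalize pw 0 (-1 / (2 * b)) p = z
      push_cast
      field_simp
      linear_combination (-z) * Complex.I_sq
  · rintro lam h0 hl ⟨φ, hc, hne, h1, h2, e1, e2⟩
    have hc1 : ContDiff ℝ 1 φ := hc.of_le (by exact_mod_cast le_top)
    apply hne
    funext p
    have := part_two a b ha hb hab lam h0 hl (fun q => (φ q).1) (fun q => (φ q).2)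
      hc1.fst hc1.snd (fun p => by simp [h1 p]) (fun p => by simp [h2 p])
      (fun p => by simp [h1 p]) (fun p => by simp [h2 p]) e1 e2 p
    exact Prod.ext this.1 this.2
end

section
/- Let X be a compact topological space and μ a finite Borel measure on X with full support and μ(X) > 0. Let d ≥ 1 and let V be a finite-dimensional complex subspace of the space of continuous maps X → ℂ^d. Suppose that for every continuous function ξ : X → ℝ with ∫_X ξ dμ = 0 there exists ψ ∈ V with ∫_X |ψ|² dμ = 1 and ∫_X ξ·|ψ|² dμ = 0. Then there exist m ≥ 1 and ψ₁, …, ψ_m ∈ V such that Σ_{j=1}^m |ψⱼ(x)|² = 1 for every x ∈ X. (This is the convexity/Hahn–Banach step in the proof of Proposition 1.2: a conformally critical metric for a Dirac eigenvalue admits eigenspinors ψ₁, …, ψ_m with Σ|ψⱼ|² = 1.) -/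
open MeasureTheory

lemma isCompact_convexHull_aux {E : Type*} [NormedAddCommGroup E] [NormedSpace ℝ E]
    [FiniteDimensional ℝ E] {K : Set E} (hK : IsCompact K) : IsCompact (convexHull ℝ K) := by
  rcases K.eq_empty_or_nonempty with rfl | ⟨k0, hk0⟩
  · simp
  let n := Module.finrank ℝ E + 1
  have hc : IsCompact ((fun p : (Fin n → ℝ) × (Fin n → E) => ∑ i, p.1 i • p.2 i) ''
      (stdSimplex ℝ (Fin n) ×ˢ Set.pi Set.univ (fun _ => K))) := by
    apply IsCompact.image
    · exact (isCompact_stdSimplex ℝ (Fin n)).prod (isCompact_univ_pi fun _ => hK)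
    · fun_prop
  convert hc using 1
  apply Set.Subset.antisymm
  · intro x hx
    obtain ⟨ι, hι, z, w, hz, hai, hw, hw1, hwz⟩ := eq_pos_convex_span_of_mem_convexHull hx
    have hcard : Fintype.card ι ≤ Fintype.card (Fin n) := by
      rw [Fintype.card_fin]
      exact hai.card_le_finrank_succ.trans (Nat.succ_le_succ (Submodule.finrank_le _))
    obtain ⟨e⟩ := Function.Embedding.nonempty_of_card_le hcard
    refine ⟨(Function.extend e w 0, Function.extend e z (fun _ => k0)), ⟨⟨?_, ?_⟩, ?_⟩, ?_⟩
    · intro j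
      by_cases hj : ∃ i, e i = j
      · obtain ⟨i, rfl⟩ := hj
        simpa [e.injective.extend_apply] using (hw i).le
      · simp [Function.extend_apply' _ _ _ hj]
    · rw [← hw1]
      refine (Fintype.sum_of_injective e e.injective _ _ ?_ ?_).symm
      · intro j hj
        exact Function.extend_apply' _ _ _ hj
      · intro i
        simp [e.injective.extend_apply]
    · intro j _
      by_cases hj : ∃ i, e i = j
      · obtain ⟨i, rfl⟩ := hj
        simpa [e.injective.extend_apply] using hz ⟨i, rfl⟩
      · simpa [Function.extend_apply' _ _ _ hj] using hk0
    · rw [← hwz]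
      refine (Fintype.sum_of_injective e e.injective _ _ ?_ ?_).symm
      · intro j hj
        simp [Function.extend_apply' _ _ _ hj]
      · intro i
        simp [e.injective.extend_apply]
  · rintro _ ⟨⟨w, z⟩, ⟨⟨hw0, hw1⟩, hz⟩, rfl⟩
    exact (convex_convexHull ℝ K).sum_mem (fun i _ => hw0 i) hw1
      (fun i _ => subset_convexHull ℝ K (hz i (Set.mem_univ i)))

/-- Real part of the pointwise Hermitian product, as a real bilinear map. -/
noncomputable def reInnerAux (X : Type*) [TopologicalSpace X] (d : ℕ) :
    C(X, EuclideanSpace ℂ (Fin d)) →ₗ[ℝ] C(X, EuclideanSpace ℂ (Fin d)) →ₗ[ℝ] C(X, ℝ) :=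
  LinearMap.mk₂ ℝ (fun f g => ⟨fun x => (inner ℂ (f x) (g x)).re, by fun_prop⟩)
    (by intros; ext; simp)
    (by intro c f g; ext x; simp [inner_smul_left_eq_smul])
    (by intros; ext; simp)
    (by intro c f g; ext x; simp [inner_smul_right_eq_smul])

lemma reInnerAux_self {X : Type*} [TopologicalSpace X] {d : ℕ}
    (f : C(X, EuclideanSpace ℂ (Fin d))) (x : X) : reInnerAux X d f f x = ‖f x‖ ^ 2 := by
  have := inner_self_eq_norm_sq (𝕜 := ℂ) (f x)
  simpa [reInnerAux] using this

lemma integrable_aux {X : Type*} [TopologicalSpace X] [CompactSpace X]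
    [MeasurableSpace X] [BorelSpace X] (μ : Measure X) [IsFiniteMeasure μ] (f : C(X, ℝ)) :
    Integrable f μ :=
  f.continuous.integrable_of_hasCompactSupport (HasCompactSupport.of_compactSpace _)

lemma integral_sq_pos_aux {X : Type*} [TopologicalSpace X] [CompactSpace X]
    [MeasurableSpace X] [BorelSpace X] (μ : Measure X) [IsFiniteMeasure μ] [μ.IsOpenPosMeasure]
    (f : C(X, ℝ)) (h0 : ∀ x, 0 ≤ f x) (hf : f ≠ 0) : 0 < ∫ x, f x ∂μ := by
  obtain ⟨x, hx⟩ := DFunLike.ne_iff.1 hf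
  exact integral_pos_of_integrable_nonneg_nonzero f.continuous (integrable_aux μ f) h0 hx

/-- The convexity/Hahn–Banach step in Proposition 1.2: let `X` be a compact space, `μ` a
finite Borel measure with full support and `μ(X) > 0`, and `V` a finite-dimensional complex
subspace of continuous `ℂ^d`-valued maps. If for every continuous `ξ : X → ℝ` with
`∫ ξ dμ = 0` there is `ψ ∈ V`, `L²(μ)`-normalised, with `∫ ξ |ψ|² dμ = 0`, then there are
`ψ₁, …, ψ_m ∈ V` with `Σⱼ |ψⱼ(x)|² = 1` for every `x ∈ X`. -/
theorem exists_eigenspinors_sum_of_squares_one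
    (X : Type*) [TopologicalSpace X] [CompactSpace X]
    [MeasurableSpace X] [BorelSpace X]
    (μ : Measure X) [IsFiniteMeasure μ] [μ.IsOpenPosMeasure]
    (hμ : 0 < μ Set.univ)
    (d : ℕ) (hd : 1 ≤ d)
    (V : Submodule ℂ C(X, EuclideanSpace ℂ (Fin d)))
    (hV : FiniteDimensional ℂ V)
    (h : ∀ ξ : C(X, ℝ), (∫ x, ξ x ∂μ) = 0 →
      ∃ ψ ∈ V, (∫ x, ‖ψ x‖ ^ 2 ∂μ) = 1 ∧ (∫ x, ξ x * ‖ψ x‖ ^ 2 ∂μ) = 0) :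
    ∃ m : ℕ, 1 ≤ m ∧
      ∃ ψ : Fin m → C(X, EuclideanSpace ℂ (Fin d)),
        (∀ j, ψ j ∈ V) ∧ ∀ x : X, ∑ j, ‖ψ j x‖ ^ 2 = 1 := by
  classical
  let N : C(X, EuclideanSpace ℂ (Fin d)) → C(X, ℝ) := fun f => reInnerAux X d f f
  have hN : ∀ f x, N f x = ‖f x‖ ^ 2 := reInnerAux_self
  have hNsmul : ∀ (c : ℝ) f, N (c • f) = c ^ 2 • N f := by
    intro c f
    ext x
    simp [hN, norm_smul, mul_pow]
  have hNcont : Continuous N := by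
    have : N = fun f => (⟨fun v : EuclideanSpace ℂ (Fin d) => ‖v‖ ^ 2, by fun_prop⟩ :
        C(EuclideanSpace ℂ (Fin d), ℝ)).comp f := by
      ext f x
      simp [hN]
    rw [this]
    exact ContinuousMap.continuous_postcomp _
  have hint := integrable_aux μ
  let I : C(X, ℝ) →ₗ[ℝ] ℝ :=
    { toFun := fun f => ∫ x, f x ∂μ
      map_add' := fun f g => integral_add (hint f) (hint g)
      map_smul' := fun c f => integral_const_mul c _ }
  have hI : ∀ f, I f = ∫ x, f x ∂μ := fun _ => rfl
  have hIcont : Continuous I := by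
    refine AddMonoidHomClass.continuous_of_bound I (μ.real Set.univ) fun f => ?_
    rw [mul_comm]
    exact norm_integral_le_of_norm_le_const (Filter.Eventually.of_forall fun x => f.norm_coe_le_norm x)
  have hq : ∀ f, f ≠ 0 → 0 < I (N f) := by
    intro f hf
    refine integral_sq_pos_aux μ (N f) (fun x => by rw [hN]; positivity) ?_
    intro h0
    apply hf
    ext1 x
    have := hN f x
    rw [h0] at this
    simpa using this.symm
  -- the finite-dimensional space
  let VR := V.restrictScalars ℝ
  have hVR : VR.FG := by
    have : Module.Finite ℂ V := hV
    have h2 : Module.Finite ℝ V := Module.Finite.trans ℂ V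
    exact Module.Finite.iff_fg.1 (show Module.Finite ℝ VR from h2)
  let S : Submodule ℝ C(X, ℝ) := Submodule.map₂ (reInnerAux X d) VR VR ⊔ Submodule.span ℝ {1}
  have hS : S.FG := (hVR.map₂ _ hVR).sup (Submodule.fg_span_singleton _)
  have : FiniteDimensional ℝ S := Module.Finite.iff_fg.2 hS
  have hNS : ∀ f ∈ V, N f ∈ S := fun f hf =>
    Submodule.mem_sup_left (Submodule.apply_mem_map₂ _ hf hf)
  have h1S : (1 : C(X, ℝ)) ∈ S := Submodule.mem_sup_right (Submodule.mem_span_singleton_self _)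
  let M : ℝ := I 1
  have hX : Nonempty X := by
    by_contra hne
    rw [not_nonempty_iff] at hne
    rw [Set.univ_eq_empty_iff.2 hne] at hμ
    simp at hμ
  have hM : 0 < M := integral_sq_pos_aux μ 1 (fun x => zero_le_one) one_ne_zero
  -- the compact set
  have : ProperSpace V := FiniteDimensional.proper ℂ V
  let Φ : V → S := fun ψ => (I (N ψ))⁻¹ • ⟨N ψ, hNS ψ ψ.2⟩
  let K : Set S := Φ '' Metric.sphere 0 1
  have hK : IsCompact K := by
    refine (isCompact_sphere (0 : V) 1).image_of_continuousOn ?_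
    refine ContinuousOn.smul (f := fun ψ : V => (I (N ψ))⁻¹)
      (g := fun ψ : V => (⟨N ψ, hNS ψ ψ.2⟩ : S)) ?_ ?_
    · apply ContinuousOn.inv₀
      · exact (hIcont.comp (hNcont.comp continuous_subtype_val)).continuousOn
      · intro ψ hψ
        apply (hq _ _).ne'
        intro h0
        have hψ' : dist ψ.1 0 = 1 := hψ
        rw [h0] at hψ'
        simp at hψ'
    · exact (Continuous.subtype_mk (hNcont.comp continuous_subtype_val) _).continuousOn
  have hKmem : ∀ ψ (hψ : ψ ∈ V), I (N ψ) = 1 → (⟨N ψ, hNS ψ hψ⟩ : S) ∈ K := by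
    intro ψ hψ h1
    have hne : ψ ≠ 0 := by
      rintro rfl
      have : N 0 = 0 := by ext x; simp [hN]
      simp [this] at h1
    have hn : ‖ψ‖ ≠ 0 := norm_ne_zero_iff.2 hne
    refine ⟨⟨‖ψ‖⁻¹ • ψ, VR.smul_mem _ hψ⟩, ?_, ?_⟩
    · change dist (‖ψ‖⁻¹ • ψ) 0 = 1
      rw [dist_zero_right, norm_smul, norm_inv, norm_norm, inv_mul_cancel₀ hn]
    · apply Subtype.ext
      change (I (N (‖ψ‖⁻¹ • ψ)))⁻¹ • N (‖ψ‖⁻¹ • ψ) = N ψ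
      rw [hNsmul, map_smul, h1, smul_smul, smul_eq_mul, mul_one, inv_mul_cancel₀ (by positivity),
        one_smul]
  -- separation
  have key : (M⁻¹ • ⟨1, h1S⟩ : S) ∈ convexHull ℝ K := by
    by_contra hnot
    obtain ⟨f, u, hfc, hfK⟩ := geometric_hahn_banach_point_closed (convex_convexHull ℝ K)
      (isCompact_convexHull_aux hK).isClosed hnot
    let B : S →ₗ[ℝ] Module.Dual ℝ S := LinearMap.mk₂ ℝ (fun a b => I (a.1 * b.1))
      (by intros; simp [add_mul]) (by intros; simp)
      (by intros; simp [mul_add]) (by intros; simp)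
    have hBinj : Function.Injective B := by
      rw [injective_iff_map_eq_zero]
      intro a ha
      by_contra hne
      have h0 : I (a.1 * a.1) = 0 := congrArg (fun l => l a) ha
      have : 0 < I (a.1 * a.1) := by
        refine integral_sq_pos_aux μ _ (fun x => mul_self_nonneg _) ?_
        intro hz
        apply hne
        apply Subtype.ext
        ext x
        exact mul_self_eq_zero.1 (congrArg (fun g : C(X, ℝ) => g x) hz)
      exact this.ne' h0
    have hBsurj : Function.Surjective B :=
      (LinearMap.injective_iff_surjective_of_finrank_eq_finrank
        (Subspace.dual_finrank_eq).symm).1 hBinj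
    obtain ⟨ξ, hξ⟩ := hBsurj f.toLinearMap
    have hξ' : ∀ b : S, f b = I (ξ.1 * b.1) := fun b => (congrArg (fun l => l b) hξ).symm
    obtain ⟨ψ, hψV, hψ1, hψ2⟩ := h (ξ.1 - (M⁻¹ * I ξ.1) • 1) (by
      rw [← hI, map_sub, map_smul, smul_eq_mul]
      change I ξ.1 - M⁻¹ * I ξ.1 * M = 0
      field_simp
      ring)
    have e1 : I (N ψ) = 1 := by rw [hI]; simpa only [hN] using hψ1
    have e2 : I ((ξ.1 - (M⁻¹ * I ξ.1) • 1) * N ψ) = 0 := by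
      rw [hI]; simpa only [ContinuousMap.mul_apply, hN] using hψ2
    have e3 := hfK _ (subset_convexHull ℝ K (hKmem ψ hψV e1))
    rw [hξ'] at e3 hfc
    rw [sub_mul, map_sub, smul_mul_assoc, map_smul, one_mul, e1] at e2
    have e4 : I (ξ.1 * (M⁻¹ • ⟨1, h1S⟩ : S).1) = M⁻¹ * I ξ.1 := by
      change I (ξ.1 * (M⁻¹ • 1)) = _
      rw [mul_smul_comm, map_smul, mul_one, smul_eq_mul]
    rw [e4] at hfc
    simp only [smul_eq_mul, mul_one] at e2
    linarith
  obtain ⟨ι, _, w, z, hw0, hw1, hz, hsum⟩ := mem_convexHull_iff_exists_fintype.1 key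
  choose φ hφs hφ using hz
  let e := Fintype.equivFin ι
  let ψ : ι → C(X, EuclideanSpace ℂ (Fin d)) := fun i =>
    Real.sqrt (M * (w i * (I (N (φ i)))⁻¹)) • (φ i).1
  have hψ : ∀ x, ∑ i, ‖ψ i x‖ ^ 2 = 1 := by
    intro x
    have h1 : (∑ i, w i * ((I (N (φ i)))⁻¹ * N (φ i) x)) = M⁻¹ := by
      have := congrArg (fun s : S => s.1 x) hsum
      simp only [← hφ] at this
      simpa [Φ] using this
    calc ∑ i, ‖ψ i x‖ ^ 2 = ∑ i, M * (w i * ((I (N (φ i)))⁻¹ * N (φ i) x)) := by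
          refine Finset.sum_congr rfl fun i _ => ?_
          have hnn : 0 ≤ I (N (φ i)) :=
            integral_nonneg fun x => by simp only [hN]; positivity
          rw [← hN, hNsmul, Real.sq_sqrt (mul_nonneg hM.le (mul_nonneg (hw0 i) (inv_nonneg.2 hnn)))]
          simp only [ContinuousMap.smul_apply, smul_eq_mul]
          ring
      _ = 1 := by rw [← Finset.mul_sum, h1, mul_inv_cancel₀ hM.ne']
  refine ⟨Fintype.card ι, ?_, fun j => ψ (e.symm j), fun j => VR.smul_mem _ (φ _).2, ?_⟩
  · rw [Nat.one_le_iff_ne_zero]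
    intro h0
    have := Fintype.card_eq_zero_iff.1 h0
    simp at hw1
  · intro x
    rw [← hψ x]
    exact Equiv.sum_comp e.symm (fun i => ‖ψ i x‖ ^ 2)
end
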